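/- arXiv:1808.08849 — 2 statements merged into one kernel-verified Lean document; each statement's English description precedes it below -/
import Mathlib

section
/- Let E belong to the class A(λ,n,m) and suppose m is not a perfect power, i.e., there are no natural numbers a and i with i ≥ 2 and m = a^i (for example m ∈ {2,3,5,6,7,10,11,12,13,14,15,17}). Then E is not Lipschitz equivalent to any dust-like self-similar set. -/
open MeasureTheory Polynomial

/-- The class `𝒜(λ, n, m)` of self-similar subsets of `ℝ` with `m` exact overlaps,
generated by `n` similitudes `fᵢ x = λ x + bᵢ` of the same ratio `λ`. -/
def IsInClassA (lam : ℝ) (n m : ℕ) (E : Set ℝ) : Prop :=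
  lam ∈ Set.Ioo (0 : ℝ) 1 ∧ 1 ≤ m ∧ m + 2 ≤ n ∧
  ∃ b : ℕ → ℝ,
    b 0 = 0 ∧ b (n - 1) = 1 - lam ∧
    (∀ i, i + 1 < n → b i < b (i + 1)) ∧
    (∀ i, i + 1 < n →
      (Set.Icc (b i) (b i + lam) ∩ Set.Icc (b (i + 1)) (b (i + 1) + lam)).Nonempty →
        volume (Set.Icc (b i) (b i + lam) ∩ Set.Icc (b (i + 1)) (b (i + 1) + lam)) = 0 ∨
        volume (Set.Icc (b i) (b i + lam) ∩ Set.Icc (b (i + 1)) (b (i + 1) + lam)) =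
          ENNReal.ofReal (lam * lam)) ∧
    {i : ℕ | i + 1 < n ∧
      volume (Set.Icc (b i) (b i + lam) ∩ Set.Icc (b (i + 1)) (b (i + 1) + lam)) =
        ENNReal.ofReal (lam * lam)}.ncard = m ∧
    E.Nonempty ∧ IsCompact E ∧
    E = ⋃ i ∈ Finset.range n, (fun x => lam * x + b i) '' E

/-- A dust-like self-similar set in `ℝ^d`: the attractor of `t ≥ 2` contracting similitudes
whose images are pairwise disjoint (strong separation condition). -/
def IsDustLike {d : ℕ} (F : Set (EuclideanSpace ℝ (Fin d))) : Prop :=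
  F.Nonempty ∧ IsCompact F ∧
  ∃ t : ℕ, 2 ≤ t ∧
    ∃ (g : Fin t → EuclideanSpace ℝ (Fin d) → EuclideanSpace ℝ (Fin d)) (r : Fin t → ℝ),
      (∀ j, r j ∈ Set.Ioo (0 : ℝ) 1) ∧
      (∀ j x y, dist (g j x) (g j y) = r j * dist x y) ∧
      F = ⋃ j, g j '' F ∧
      (∀ j j', j ≠ j' → Disjoint (g j '' F) (g j' '' F))

/-- Lipschitz equivalence of two sets in (possibly different) metric spaces. -/
def LipEquiv {X Y : Type*} [MetricSpace X] [MetricSpace Y] (A : Set X) (B : Set Y) : Prop :=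
  ∃ f : A → B, Function.Bijective f ∧ ∃ C : ℝ, 0 < C ∧
    ∀ x y : A, C⁻¹ * dist x y ≤ dist (f x) (f y) ∧ dist (f x) (f y) ≤ C * dist x y

lemma aux_finite (x : ℝ) (hx0 : 0 < x) (hx1 : x < 1) (c : ℝ) (hc : 0 < c) (L : ℝ) (hL : 0 < L) :
    {z : ℤ | L / 2 ≤ x ^ z * c ∧ x ^ z * c ≤ 2 * L}.Finite := by
  have hlx : Real.log x < 0 := Real.log_neg hx0 hx1
  apply (Set.finite_Icc ⌊(Real.log (2 * L) - Real.log c) / Real.log x⌋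
    ⌈(Real.log (L / 2) - Real.log c) / Real.log x⌉).subset
  rintro z ⟨h1, h2⟩
  have hz : 0 < x ^ z := zpow_pos hx0 z
  have e : Real.log (x ^ z * c) = z * Real.log x + Real.log c := by
    rw [Real.log_mul hz.ne' hc.ne', Real.log_zpow]
  have h1' := Real.log_le_log (by positivity) h1
  have h2' := Real.log_le_log (by positivity) h2
  rw [e] at h1' h2'
  constructor
  · apply Int.floor_le_iff.2
    have : (Real.log (2 * L) - Real.log c) / Real.log x ≤ z := by
      rw [div_le_iff_of_neg hlx]; linarith
    linarith
  · apply Int.le_ceil_iff.2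
    have : (z : ℝ) ≤ (Real.log (L / 2) - Real.log c) / Real.log x := by
      rw [le_div_iff_of_neg hlx]; linarith
    linarith

lemma aux_eventually (x : ℝ) (hx0 : 0 < x) (hx1 : x < 1) (T : Finset ℝ) (hT : ∀ τ ∈ T, 0 < τ)
    (u : ℕ → ℝ) (hu : ∀ i, ∃ z : ℤ, ∃ τ ∈ T, ∃ τ' ∈ T, u i = x ^ z * (τ / τ')) (L : ℝ) (hL : 0 < L)
    (h : Filter.Tendsto u Filter.atTop (nhds L)) : ∀ᶠ i in Filter.atTop, u i = L := by
  set V : Set ℝ := ⋃ τ ∈ T, ⋃ τ' ∈ T, (fun z : ℤ => x ^ z * (τ / τ')) ''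
    {z : ℤ | L / 2 ≤ x ^ z * (τ / τ') ∧ x ^ z * (τ / τ') ≤ 2 * L} with hV
  have hfin : V.Finite := by
    apply Set.Finite.biUnion T.finite_toSet
    intro τ hτ
    apply Set.Finite.biUnion T.finite_toSet
    intro τ' hτ'
    exact (aux_finite x hx0 hx1 _ (div_pos (hT _ hτ) (hT _ hτ')) L hL).image _
  have hfin2 : (V \ {L}).Finite := hfin.subset Set.sdiff_subset
  have hnh : (V \ {L})ᶜ ∈ nhds L := hfin2.isClosed.isOpen_compl.mem_nhds (by simp)
  have h1 := h.eventually hnh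
  have h2 := h.eventually (Icc_mem_nhds (show L / 2 < L by linarith) (show L < 2 * L by linarith))
  filter_upwards [h1, h2] with i hi1 hi2
  by_contra hne
  apply hi1
  refine ⟨?_, hne⟩
  obtain ⟨z, τ, hτ, τ', hτ', e⟩ := hu i
  simp only [hV, Set.mem_iUnion]
  refine ⟨τ, hτ, τ', hτ', z, ?_, e.symm⟩
  rw [e] at hi2
  exact hi2

theorem aux_analysis {t : ℕ} (p : Fin t → ℝ) (hp0 : ∀ j, 0 < p j) (mw : List (Fin t) → ℝ)
    (hsum : ∀ w, mw w = ∑ j, mw (j :: w)) (c2 c3 : ℝ) (hc2 : 0 < c2)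
    (hlo : ∀ w, c2 * (w.map p).prod ≤ mw w) (hhi : ∀ w, mw w ≤ c3 * (w.map p).prod)
    (x : ℝ) (hx0 : 0 < x) (hx1 : x < 1) (T : Finset ℝ) (hT : ∀ τ ∈ T, 0 < τ)
    (hty : ∀ w, ∃ k : ℕ, ∃ τ ∈ T, mw w = x ^ k * τ) :
    ∑ j, p j = 1 ∧ ∀ j, (∃ k0 k1 : ℕ, ∃ τ0 ∈ T, ∃ τ1 ∈ T, p j * (x ^ k0 * τ0) = x ^ k1 * τ1) ∧
      ∃ q : ℕ, 0 < q ∧ ∃ l l' : ℕ, p j ^ q * x ^ l = x ^ l' := by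
  have hP : ∀ w : List (Fin t), 0 < (w.map p).prod := by
    intro w
    induction w with
    | nil => simp
    | cons a w ih => simp only [List.map_cons, List.prod_cons]; exact mul_pos (hp0 a) ih
  have hm0 : ∀ w, 0 < mw w := fun w => lt_of_lt_of_le (mul_pos hc2 (hP w)) (hlo w)
  set S := ∑ j, p j with hS
  have hS0 : 0 ≤ S := Finset.sum_nonneg fun j _ => (hp0 j).le
  have up : ∀ k : ℕ, ∀ w, mw w ≤ c3 * S ^ k * (w.map p).prod := by
    intro k
    induction k with
    | zero => intro w; simpa using hhi w
    | succ k ih =>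
      intro w
      rw [hsum w]
      calc ∑ j, mw (j :: w) ≤ ∑ j, c3 * S ^ k * ((j :: w).map p).prod :=
            Finset.sum_le_sum fun j _ => ih _
        _ = c3 * S ^ (k + 1) * (w.map p).prod := by
            simp only [List.map_cons, List.prod_cons]
            rw [← Finset.mul_sum, ← Finset.sum_mul, ← hS]; ring
  have lo : ∀ k : ℕ, ∀ w, c2 * S ^ k * (w.map p).prod ≤ mw w := by
    intro k
    induction k with
    | zero => intro w; simpa using hlo w
    | succ k ih =>
      intro w
      rw [hsum w]
      calc c2 * S ^ (k + 1) * (w.map p).prod = ∑ j, c2 * S ^ k * ((j :: w).map p).prod := by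
            simp only [List.map_cons, List.prod_cons]
            rw [← Finset.mul_sum, ← Finset.sum_mul, ← hS]; ring
        _ ≤ ∑ j, mw (j :: w) := Finset.sum_le_sum fun j _ => ih _
  have hS1 : S = 1 := by
    rcases lt_trichotomy S 1 with h | h | h
    · exfalso
      have ht : Filter.Tendsto (fun k : ℕ => c3 * S ^ k) Filter.atTop (nhds (c3 * 0)) :=
        (tendsto_pow_atTop_nhds_zero_of_lt_one hS0 h).const_mul c3
      have := ge_of_tendsto' ht (fun k => by simpa using up k [])
      have := hm0 []
      linarith
    · exact h
    · exfalso
      have ht := (tendsto_pow_atTop_atTop_of_one_lt h).const_mul_atTop hc2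
      obtain ⟨k, hk⟩ := (ht.eventually (Filter.eventually_gt_atTop (mw []))).exists
      have := lo k []
      simp at this
      linarith
  refine ⟨hS1, ?_⟩
  intro j
  set φ : List (Fin t) → ℝ := fun w => mw w / (w.map p).prod with hφ
  have hφsum : ∀ w, φ w = ∑ i, p i * φ (i :: w) := by
    intro w
    simp only [hφ, List.map_cons, List.prod_cons]
    rw [hsum w, Finset.sum_div]
    refine Finset.sum_congr rfl fun i _ => ?_
    have := (hp0 i).ne'
    have := (hP w).ne'
    field_simp
  have hbdd : BddAbove (Set.range φ) := by
    refine ⟨c3, ?_⟩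
    rintro _ ⟨w, rfl⟩
    exact (div_le_iff₀ (hP w)).2 (hhi w)
  set M := sSup (Set.range φ) with hM
  have hle : ∀ w, φ w ≤ M := fun w => le_csSup hbdd ⟨w, rfl⟩
  have hMpos : 0 < M := lt_of_lt_of_le (div_pos (hm0 []) (hP [])) (hle [])
  have hstep : ∀ w, M - (M - φ w) / p j ≤ φ (j :: w) := by
    intro w
    have h1 := hφsum w
    rw [← Finset.add_sum_erase _ _ (Finset.mem_univ j)] at h1
    have h2 : ∑ i ∈ Finset.univ.erase j, p i * φ (i :: w) ≤ ∑ i ∈ Finset.univ.erase j, p i * M :=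
      Finset.sum_le_sum fun i _ => mul_le_mul_of_nonneg_left (hle _) (hp0 i).le
    rw [← Finset.sum_mul] at h2
    have h3 : p j + ∑ i ∈ Finset.univ.erase j, p i = 1 := by
      rw [Finset.add_sum_erase _ _ (Finset.mem_univ j)]; exact hS1
    have hpj := hp0 j
    have h4 : ∑ i ∈ Finset.univ.erase j, p i = 1 - p j := by linarith
    rw [h4] at h2
    rw [sub_le_iff_le_add, ← sub_le_iff_le_add', le_div_iff₀ hpj]
    nlinarith
  obtain ⟨u, -, hu1, hu2⟩ := exists_seq_tendsto_sSup (Set.range_nonempty φ) hbdd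
  choose W hW using hu2
  have hW0 : Filter.Tendsto (fun i => φ (W i)) Filter.atTop (nhds M) := by
    simpa only [hW] using hu1
  have hWk : ∀ k : ℕ, Filter.Tendsto (fun i => φ (List.replicate k j ++ W i)) Filter.atTop (nhds M) := by
    intro k
    induction k with
    | zero => simpa using hW0
    | succ k ih =>
      have h1 : Filter.Tendsto (fun i => M - (M - φ (List.replicate k j ++ W i)) / p j) Filter.atTop
          (nhds (M - (M - M) / p j)) := by
        apply Filter.Tendsto.const_sub
        apply Filter.Tendsto.div_const
        exact ih.const_sub M
      simp only [sub_self, zero_div, sub_zero] at h1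
      refine tendsto_of_tendsto_of_tendsto_of_le_of_le h1 tendsto_const_nhds ?_ ?_
      · intro i
        simp only [List.replicate_succ, List.cons_append]
        exact hstep _
      · intro i
        exact hle _
  choose K τ hτT hmτ using hty
  have hev : ∀ k : ℕ, ∀ᶠ i in Filter.atTop, mw (List.replicate k j ++ W i) / mw (W i) = p j ^ k := by
    intro k
    apply aux_eventually x hx0 hx1 T hT
    · intro i
      refine ⟨(K (List.replicate k j ++ W i) : ℤ) - K (W i), _, hτT (List.replicate k j ++ W i), _, hτT (W i), ?_⟩
      rw [zpow_sub₀ hx0.ne', hmτ (List.replicate k j ++ W i), hmτ (W i)]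
      simp only [zpow_natCast]
      rw [mul_div_mul_comm]
    · exact pow_pos (hp0 j) k
    · have h1 := ((hWk k).div hW0 hMpos.ne').mul_const (p j ^ k)
      rw [div_self hMpos.ne', one_mul] at h1
      refine h1.congr fun i => ?_
      simp only [hφ, Pi.div_apply]
      have := (hP (W i)).ne'
      have := (hm0 (W i)).ne'
      have := (hp0 j).ne'
      simp only [List.map_append, List.map_replicate, List.prod_append, List.prod_replicate]
      field_simp
  have hall : ∀ᶠ i in Filter.atTop, ∀ k ∈ Finset.range (T.card + 2),
      mw (List.replicate k j ++ W i) / mw (W i) = p j ^ k := by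
    rw [Filter.eventually_all_finset]
    exact fun k _ => hev k
  obtain ⟨i, hi⟩ := hall.exists
  constructor
  · have h := hi 1 (by simp)
    rw [div_eq_iff (hm0 _).ne', pow_one, hmτ, hmτ (W i)] at h
    exact ⟨_, _, _, hτT _, _, hτT _, h.symm⟩
  · obtain ⟨a, ha, b, hb, hab, he⟩ := Finset.exists_ne_map_eq_of_card_lt_of_maps_to
      (s := Finset.range (T.card + 2)) (t := T) (f := fun k => τ (List.replicate k j ++ W i))
      (by simp) (fun k _ => hτT _)
    wlog hlt : a < b generalizing a b
    · exact this b hb a ha hab.symm he.symm (by omega)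
    refine ⟨b - a, by omega, K (List.replicate a j ++ W i), K (List.replicate b j ++ W i), ?_⟩
    have h1 := hi a ha
    have h2 := hi b hb
    rw [div_eq_iff (hm0 _).ne', hmτ (List.replicate a j ++ W i)] at h1
    rw [div_eq_iff (hm0 _).ne', hmτ (List.replicate b j ++ W i)] at h2
    rw [← he] at h2
    have hτ0 := hT _ (hτT (List.replicate a j ++ W i))
    apply mul_right_cancel₀ hτ0.ne'
    rw [h2, mul_assoc, h1, ← mul_assoc, ← pow_add, Nat.sub_add_cancel hlt.le]

lemma aux_mx (n m : ℕ) (hnm : m + 2 ≤ n) (x : ℝ) (hx0 : 0 < x) (hx1 : x < 1)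
    (hx : n * x - m * x ^ 2 = 1) : m * x < 1 := by
  have h : ((m : ℝ) + 2) ≤ n := by exact_mod_cast hnm
  have h2 : (1 - x) * (1 - m * x) = x * (n - 1 - m) := by linear_combination -hx
  have h3 : 0 < x * (n - 1 - m) := mul_pos hx0 (by linarith)
  rw [← h2] at h3
  have := (pos_iff_pos_of_mul_pos h3).1 (by linarith)
  linarith

lemma aux_irr (n m : ℕ) (hm1 : 1 ≤ m) (hnm : m + 2 ≤ n) (x : ℝ) (hx0 : 0 < x) (hx1 : x < 1)
    (hx : n * x - m * x ^ 2 = 1) : Irrational x := by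
  have hmx := aux_mx n m hnm x hx0 hx1 hx
  rintro ⟨r, hr⟩
  have hr0 : (r : ℚ) ≠ 0 := by
    rintro rfl
    simp at hr
    exact hx0.ne hr
  have hrQ : (n : ℚ) * r - m * r ^ 2 = 1 := by
    have : ((n * r - m * r ^ 2 : ℚ) : ℝ) = ((1 : ℚ) : ℝ) := by push_cast; rw [hr]; exact hx
    exact_mod_cast this
  set K : ℚ := n - 2 / r with hK
  have hK2 : K ^ 2 = ((n ^ 2 - 4 * m : ℤ) : ℚ) := by
    push_cast
    rw [hK]
    field_simp
    linear_combination (-4 : ℚ) * hrQ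
  have hden : K.den = 1 := by
    have h1 : (K ^ 2).den = 1 := by rw [hK2]; exact Rat.den_intCast _
    rw [Rat.den_pow] at h1
    exact (Nat.pow_eq_one.1 h1).resolve_right (by norm_num)
  obtain ⟨k, hk⟩ : ∃ k : ℤ, K = k := ⟨K.num, (Rat.den_eq_one_iff _ |>.1 hden).symm⟩
  have hxinv : (k : ℝ) = n - 2 / x := by
    have : ((K : ℚ) : ℝ) = (k : ℝ) := by rw [hk]; simp
    rw [← this, hK]; push_cast; rw [hr]
  have hk1 : (k : ℝ) * x = n * x - 2 := by rw [hxinv]; field_simp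
  have hmr : (1 : ℝ) ≤ m := by exact_mod_cast hm1
  have e1 : ((k : ℝ) + n) * x = 2 * (m * x) * x := by nlinarith
  have e2 : (k : ℝ) + n = 2 * (m * x) := mul_right_cancel₀ hx0.ne' e1
  have e3 : 0 < k + n := by
    have : (0 : ℝ) < k + n := by rw [e2]; positivity
    exact_mod_cast this
  have e4 : k + n < 2 := by
    have : (k : ℝ) + n < 2 := by rw [e2]; linarith
    exact_mod_cast this
  have e5 : k = 1 - n := by omega
  have e6 : k ^ 2 = (n ^ 2 - 4 * m : ℤ) := by
    rw [hk] at hK2; exact_mod_cast hK2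
  rw [e5] at e6
  have : (1 : ℤ) - 2 * n = - 4 * m := by linarith
  omega

def AuxConj (x x' u u' : ℝ) : Prop := ∃ a b : ℚ, u = a + b * x ∧ u' = a + b * x'

lemma AuxConj.add {x x' u u' v v' : ℝ} (h : AuxConj x x' u u') (k : AuxConj x x' v v') :
    AuxConj x x' (u + v) (u' + v') := by
  obtain ⟨a, b, rfl, rfl⟩ := h
  obtain ⟨c, d, rfl, rfl⟩ := k
  exact ⟨a + c, b + d, by push_cast; ring, by push_cast; ring⟩

lemma AuxConj.mul {x x' u u' v v' : ℝ} (s t : ℚ) (hs : x + x' = s) (ht : x * x' = t)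
    (h : AuxConj x x' u u') (k : AuxConj x x' v v') :
    AuxConj x x' (u * v) (u' * v') := by
  obtain ⟨a, b, rfl, rfl⟩ := h
  obtain ⟨c, d, rfl, rfl⟩ := k
  refine ⟨a * c - b * d * t, a * d + b * c + b * d * s, ?_, ?_⟩
  · push_cast; rw [← hs, ← ht]; ring
  · push_cast; rw [← hs, ← ht]; ring

lemma AuxConj.pow {x x' u u' : ℝ} (s t : ℚ) (hs : x + x' = s) (ht : x * x' = t)
    (h : AuxConj x x' u u') (k : ℕ) :
    AuxConj x x' (u ^ k) (u' ^ k) := by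
  induction k with
  | zero => exact ⟨1, 0, by simp, by simp⟩
  | succ k ih => rw [pow_succ, pow_succ]; exact ih.mul s t hs ht h

lemma AuxConj.eq {x x' u u' v v' : ℝ} (hx : Irrational x) (h : AuxConj x x' u u')
    (k : AuxConj x x' v v') (e : u = v) : u' = v' := by
  obtain ⟨a, b, rfl, rfl⟩ := h
  obtain ⟨c, d, rfl, rfl⟩ := k
  have hbd : b = d := by
    by_contra hne
    apply hx
    refine ⟨(c - a) / (b - d), ?_⟩
    have : ((b : ℝ) - d) ≠ 0 := by
      rw [sub_ne_zero]; exact_mod_cast hne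
    push_cast
    rw [div_eq_iff this]
    linarith
  subst hbd
  have : (a : ℝ) = c := by linarith
  rw [this]

lemma AuxConj.norm {x x' u u' : ℝ} (s t : ℚ) (hs : x + x' = s) (ht : x * x' = t)
    (h : AuxConj x x' u u') : ∃ r : ℚ, u * u' = r := by
  obtain ⟨a, b, rfl, rfl⟩ := h
  refine ⟨a ^ 2 + a * b * s + b ^ 2 * t, ?_⟩
  push_cast; rw [← hs, ← ht]; ring

lemma aux_pow (m : ℕ) (hm : ¬ ∃ a i : ℕ, 2 ≤ i ∧ m = a ^ i) (v q d : ℕ) (hq : 0 < q)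
    (h : v ^ q = m ^ d) : q ∣ d := by
  have hg : 0 < Nat.gcd q d := Nat.gcd_pos_of_pos_left _ hq
  obtain ⟨g, q', d', hg', hc, rfl, rfl⟩ := Nat.exists_coprime' hg
  rw [pow_mul, pow_mul] at h
  have h' : v ^ q' = m ^ d' := Nat.pow_left_injective hg'.ne' h
  obtain ⟨c, -, hc2⟩ := Nat.exists_eq_pow_of_exponent_coprime_of_pow_eq_pow hc h'
  have : ¬ 2 ≤ q' := fun h2 => hm ⟨c, q', h2, hc2⟩
  have hq1 : q' = 1 := by
    rcases q' with _ | _ | q'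
    · simp at hq
    · rfl
    · omega
  subst hq1
  exact Nat.mul_dvd_mul_right (one_dvd _) _

theorem aux_algebra (n m : ℕ) (hm1 : 1 ≤ m) (hnm : m + 2 ≤ n)
    (hm : ¬ ∃ a i : ℕ, 2 ≤ i ∧ m = a ^ i) (x : ℝ) (hx0 : 0 < x) (hx1 : x < 1)
    (hx : n * x - m * x ^ 2 = 1) {t : ℕ} (ht : 0 < t) (p : Fin t → ℝ) (hp0 : ∀ j, 0 < p j)
    (hp1 : ∀ j, p j < 1) (hsum : ∑ j, p j = 1) (T : Finset ℝ) (hT : ∀ τ ∈ T, 0 < τ)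
    (hT2 : ∀ τ ∈ T, ∃ N M : ℕ, τ = N - M * x)
    (h : ∀ j, (∃ k0 k1 : ℕ, ∃ τ0 ∈ T, ∃ τ1 ∈ T, p j * (x ^ k0 * τ0) = x ^ k1 * τ1) ∧
      ∃ q : ℕ, 0 < q ∧ ∃ l l' : ℕ, p j ^ q * x ^ l = x ^ l') : False := by
  have hirr := aux_irr n m hm1 hnm x hx0 hx1 hx
  have hmx := aux_mx n m hnm x hx0 hx1 hx
  have hm0 : (0 : ℝ) < m := by exact_mod_cast hm1
  set x' : ℝ := n / m - x with hx'
  have hs : x + x' = ((n / m : ℚ) : ℝ) := by push_cast; rw [hx']; ring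
  have hxx : x * x' = 1 / m := by rw [hx']; field_simp; linarith
  have htt : x * x' = ((1 / m : ℚ) : ℝ) := by push_cast; exact hxx
  have hx'1 : 1 < x' := by
    have : m * x * x' = 1 := by rw [mul_assoc, hxx]; field_simp
    have h0 : 0 < m * x := by positivity
    by_contra hle
    push Not at hle
    nlinarith
  have cx : AuxConj x x' x x' := ⟨0, 1, by simp, by simp⟩
  have c0 : AuxConj x x' 0 0 := ⟨0, 0, by simp, by simp⟩
  have key : ∀ j, ∃ l : ℕ, 0 < l ∧ p j = x ^ l := by
    intro j
    obtain ⟨⟨k0, k1, τ0, hτ0, τ1, hτ1, e⟩, q, hq, l, l', e'⟩ := h j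
    obtain ⟨N0, M0, t0⟩ := hT2 _ hτ0
    obtain ⟨N1, M1, t1⟩ := hT2 _ hτ1
    have ct0 : AuxConj x x' τ0 (N0 - M0 * x') := ⟨N0, -M0, by rw [t0]; push_cast; ring, by push_cast; ring⟩
    have ct1 : AuxConj x x' τ1 (N1 - M1 * x') := ⟨N1, -M1, by rw [t1]; push_cast; ring, by push_cast; ring⟩
    obtain ⟨u0', hu0⟩ : ∃ u', AuxConj x x' (x ^ k0 * τ0) u' :=
      ⟨_, (cx.pow _ _ hs htt k0).mul _ _ hs htt ct0⟩
    obtain ⟨u1', hu1⟩ : ∃ u', AuxConj x x' (x ^ k1 * τ1) u' :=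
      ⟨_, (cx.pow _ _ hs htt k1).mul _ _ hs htt ct1⟩
    have h00 : 0 < x ^ k0 * τ0 := mul_pos (pow_pos hx0 _) (hT _ hτ0)
    set u0 := x ^ k0 * τ0
    set u1 := x ^ k1 * τ1
    have hu00 : u0' ≠ 0 := by
      intro hz
      have hu0s : AuxConj x' x u0' u0 := by
        obtain ⟨a, b, h1, h2⟩ := hu0; exact ⟨a, b, h2, h1⟩
      have hirr' : Irrational x' := by
        rw [hx']
        have := hirr.ratCast_sub (n / m : ℚ)
        push_cast at this
        exact this
      have := hu0s.eq hirr' ⟨0, 0, by simp, by simp⟩ (show u0' = 0 from hz) (v' := 0)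
      exact h00.ne' this
    have r1 : u1 ^ q * x ^ l = x ^ l' * u0 ^ q := by
      rw [← e, mul_pow, ← e']; ring
    have r2 : u1' ^ q * x' ^ l = x' ^ l' * u0' ^ q :=
      ((hu1.pow _ _ hs htt q).mul _ _ hs htt (cx.pow _ _ hs htt l)).eq hirr
        ((cx.pow _ _ hs htt l').mul _ _ hs htt (hu0.pow _ _ hs htt q)) r1
    have hll : l < l' := by
      by_contra hle
      push Not at hle
      have h1 : p j ^ q < 1 := pow_lt_one₀ (hp0 j).le (hp1 j) hq.ne'
      have h2 : x ^ l ≤ x ^ l' := pow_le_pow_of_le_one hx0.le hx1.le hle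
      have h3 : 0 < x ^ l := pow_pos hx0 _
      nlinarith
    obtain ⟨d, rfl⟩ := Nat.exists_eq_add_of_lt hll
    have epq : p j ^ q = x ^ (d + 1) := by
      have h3 : 0 < x ^ l := pow_pos hx0 _
      apply mul_right_cancel₀ h3.ne'
      rw [e']; ring
    obtain ⟨a0, ha0⟩ := hu0.norm _ _ hs htt
    obtain ⟨a1, ha1⟩ := hu1.norm _ _ hs htt
    have r3 : (a1 : ℝ) ^ q * (1 / m) ^ l = (1 / m) ^ (l + d + 1) * a0 ^ q := by
      rw [← ha0, ← ha1, ← hxx]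
      simp only [mul_pow]
      calc _ = (u1 ^ q * x ^ l) * (u1' ^ q * x' ^ l) := by ring
        _ = _ := by rw [r1, r2]; ring
    have r4 : (a1 : ℝ) ^ q * m ^ (d + 1) = a0 ^ q := by
      have : (1 / (m : ℝ)) ^ (l + d + 1) = (1 / m) ^ l * (1 / m) ^ (d + 1) := by ring
      rw [this] at r3
      have h4 : (1 / (m : ℝ)) ^ l ≠ 0 := by positivity
      have h5 : (a1 : ℝ) ^ q = (1 / m) ^ (d + 1) * a0 ^ q := by
        apply mul_right_cancel₀ h4
        rw [r3]; ring
      rw [h5]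
      simp only [one_div, inv_pow]
      field_simp
    have ha00 : (a0 : ℝ) ≠ 0 := by rw [← ha0]; exact mul_ne_zero h00.ne' hu00
    have ha10 : (a1 : ℝ) ≠ 0 := by
      intro hz
      rw [hz, zero_pow hq.ne', zero_mul] at r4
      exact ha00 (pow_eq_zero_iff hq.ne' |>.1 r4.symm)
    have ha10' : a1 ≠ 0 := by exact_mod_cast ha10
    have r5 : a1 ^ q * (m : ℚ) ^ (d + 1) = a0 ^ q := by exact_mod_cast r4
    set v : ℚ := |a0 / a1| with hv
    have r6 : v ^ q = ((m ^ (d + 1) : ℕ) : ℚ) := by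
      rw [hv, ← abs_pow, div_pow, ← r5, mul_div_cancel_left₀ _ (pow_ne_zero _ ha10')]
      push_cast
      exact abs_of_nonneg (by positivity)
    have hden : v.den = 1 := by
      have h1 : (v ^ q).den = 1 := by rw [r6]; exact Rat.den_natCast _
      rw [Rat.den_pow] at h1
      exact (Nat.pow_eq_one.1 h1).resolve_right hq.ne'
    have hvn : v = (v.num.natAbs : ℚ) := by
      have h1 : v = v.num := (Rat.den_eq_one_iff _ |>.1 hden).symm
      have h2 : 0 ≤ v.num := Rat.num_nonneg.2 (abs_nonneg _)
      have h3 : ((v.num.natAbs : ℤ) : ℚ) = v.num := by rw [Int.natAbs_of_nonneg h2]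
      rw [← h1] at h3
      rw [Int.cast_natCast] at h3
      exact h3.symm
    rw [hvn] at r6
    have r7 : v.num.natAbs ^ q = m ^ (d + 1) := by exact_mod_cast r6
    obtain ⟨c, hc⟩ := aux_pow m hm _ q (d + 1) hq r7
    refine ⟨c, ?_, ?_⟩
    · rcases Nat.eq_zero_or_pos c with h | h
      · subst h; simp at hc
      · exact h
    · rw [hc, mul_comm, pow_mul] at epq
      exact (pow_left_inj₀ (hp0 j).le (pow_pos hx0 _).le hq.ne').1 epq
  choose l hl hpl using key
  have csum : ∀ s : Finset (Fin t), AuxConj x x' (∑ j ∈ s, x ^ l j) (∑ j ∈ s, x' ^ l j) := by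
    intro s
    classical
    induction s using Finset.induction_on with
    | empty => simpa using c0
    | insert a s ha ih =>
      rw [Finset.sum_insert ha, Finset.sum_insert ha]
      exact (cx.pow _ _ hs htt _).add ih
  have hfin : ∑ j, x' ^ l j = 1 := by
    apply (csum Finset.univ).eq hirr (v := 1) ⟨1, 0, by simp, by simp⟩
    rw [← hsum]
    exact Finset.sum_congr rfl fun j _ => (hpl j).symm
  have : ∑ j, p j < ∑ j, x' ^ l j := by
    apply Finset.sum_lt_sum_of_nonempty
    · exact ⟨⟨0, ht⟩, Finset.mem_univ _⟩
    · intro j _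
      rw [hpl j]
      exact pow_lt_pow_left₀ (by linarith) hx0.le (hl j).ne'
  linarith

structure AuxB (lam : ℝ) (n m : ℕ) (B : Finset ℝ) : Prop where
  pos : 0 < lam
  half : lam ≤ 1 / 2
  zero_mem : (0 : ℝ) ∈ B
  one_mem : 1 - lam ∈ B
  nonneg : ∀ b ∈ B, 0 ≤ b
  le : ∀ b ∈ B, b ≤ 1 - lam
  gap : ∀ b ∈ B, ∀ b' ∈ B, b < b' → b' - b = lam * (1 - lam) ∨ lam ≤ b' - b
  card : B.card = n
  cardO : (B.filter fun b => b + lam * (1 - lam) ∈ B).card = m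

noncomputable def auxO (lam δ : ℝ) (Q : Finset ℝ) : Finset ℝ :=
  Q.filter fun p => p + δ * (1 - lam) ∈ Q

noncomputable def auxStep (δ : ℝ) (Q B : Finset ℝ) : Finset ℝ :=
  Finset.image₂ (fun p b => p + δ * b) Q B

def AuxGap (lam δ : ℝ) (Q : Finset ℝ) : Prop :=
  ∀ p ∈ Q, ∀ p' ∈ Q, p < p' → p' - p = δ * (1 - lam) ∨ δ ≤ p' - p

lemma AuxB.core {lam : ℝ} {n m : ℕ} {B : Finset ℝ} (hB : AuxB lam n m B) {δ : ℝ} (hδ : 0 < δ)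
    {Q : Finset ℝ} (hQ : AuxGap lam δ Q) {p p' b b' : ℝ} (hp : p ∈ Q) (hp' : p' ∈ Q) (hb : b ∈ B)
    (hb' : b' ∈ B) (hlt : p < p') :
    (p' = p + δ * (1 - lam) ∧ b = 1 - lam) ∨ (p' = p + δ * (1 - lam) ∧ b' = 0) ∨
      δ * lam ≤ p' + δ * b' - (p + δ * b) := by
  have h0 := hB.pos
  have h2 := hB.half
  have hb'0 := hB.nonneg _ hb'
  have hb1 := hB.le _ hb
  rcases hQ p hp p' hp' hlt with h | h
  · by_cases e1 : b = 1 - lam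
    · left; exact ⟨by linarith, e1⟩
    by_cases e2 : b' = 0
    · right; left; exact ⟨by linarith, e2⟩
    right; right
    have g1 : b ≤ 1 - lam - lam * (1 - lam) := by
      rcases hB.gap b hb _ hB.one_mem (lt_of_le_of_ne hb1 e1) with h | h <;> nlinarith
    have g2 : lam * (1 - lam) ≤ b' := by
      rcases hB.gap _ hB.zero_mem b' hb' (lt_of_le_of_ne hb'0 (Ne.symm e2)) with h | h <;> nlinarith
    have g3 : lam ≤ 1 - lam + b' - b := by nlinarith
    have := mul_le_mul_of_nonneg_left g3 hδ.le
    nlinarith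
  · right; right
    have g3 : lam ≤ 1 + b' - b := by linarith
    have := mul_le_mul_of_nonneg_left g3 hδ.le
    nlinarith

lemma AuxB.gap_step {lam : ℝ} {n m : ℕ} {B : Finset ℝ} (hB : AuxB lam n m B) {δ : ℝ} (hδ : 0 < δ)
    {Q : Finset ℝ} (hQ : AuxGap lam δ Q) : AuxGap lam (δ * lam) (auxStep δ Q B) := by
  have inblock : ∀ p b b' : ℝ, b ∈ B → b' ∈ B → p + δ * b < p + δ * b' →
      p + δ * b' - (p + δ * b) = δ * lam * (1 - lam) ∨ δ * lam ≤ p + δ * b' - (p + δ * b) := by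
    intro p b b' hb hb' hlt
    have : b < b' := by
      have : δ * b < δ * b' := by linarith
      exact lt_of_mul_lt_mul_left this hδ.le
    rcases hB.gap b hb b' hb' this with h | h
    · left; linear_combination δ * h
    · right; have := mul_le_mul_of_nonneg_left h hδ.le; linarith
  intro q hq q' hq' hlt
  simp only [auxStep, Finset.mem_image₂] at hq hq'
  obtain ⟨p, hp, b, hb, rfl⟩ := hq
  obtain ⟨p', hp', b', hb', rfl⟩ := hq'
  have h0 := hB.pos
  rcases lt_trichotomy p p' with h | h | h
  · rcases hB.core hδ hQ hp hp' hb hb' h with ⟨e, e1⟩ | ⟨e, e1⟩ | h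
    · have e3 : p + δ * b = p' + δ * 0 := by rw [e, e1]; ring
      rw [e3] at hlt ⊢
      exact inblock _ _ _ hB.zero_mem hb' hlt
    · have e3 : p' + δ * b' = p + δ * (1 - lam) := by rw [e, e1]; ring
      rw [e3] at hlt ⊢
      exact inblock _ _ _ hb hB.one_mem hlt
    · right; exact h
  · subst h
    exact inblock _ _ _ hb hb' hlt
  · exfalso
    have hpos : 0 < δ * lam := by positivity
    rcases hB.core hδ hQ hp' hp hb' hb h with ⟨e, e1⟩ | ⟨e, e1⟩ | h
    · have := mul_nonneg hδ.le (hB.nonneg b hb)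
      rw [e, e1] at hlt; linarith
    · have := mul_le_mul_of_nonneg_left (hB.le b' hb') hδ.le
      rw [e, e1] at hlt; linarith
    · linarith

/-- coincidence of two representations -/
lemma AuxB.coinc {lam : ℝ} {n m : ℕ} {B : Finset ℝ} (hB : AuxB lam n m B) {δ : ℝ} (hδ : 0 < δ)
    {Q : Finset ℝ} (hQ : AuxGap lam δ Q) {p p' b b' : ℝ} (hp : p ∈ Q) (hp' : p' ∈ Q) (hb : b ∈ B)
    (hb' : b' ∈ B) (hlt : p < p') (he : p + δ * b = p' + δ * b') :
    p' = p + δ * (1 - lam) ∧ b = 1 - lam := by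
  have h0 := hB.pos
  have hpos : 0 < δ * lam := by positivity
  rcases hB.core hδ hQ hp hp' hb hb' hlt with h | ⟨e, e1⟩ | h
  · exact h
  · refine ⟨e, ?_⟩
    rw [e, e1] at he
    have : δ * b = δ * (1 - lam) := by linarith
    exact mul_left_cancel₀ hδ.ne' this
  · linarith

lemma AuxB.card_step {lam : ℝ} {n m : ℕ} {B : Finset ℝ} (hB : AuxB lam n m B) {δ : ℝ} (hδ : 0 < δ)
    {Q : Finset ℝ} (hQ : AuxGap lam δ Q) :
    (auxStep δ Q B).card + (auxO lam δ Q).card = n * Q.card := by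
  classical
  have h2 := hB.half
  set R : Finset (ℝ × ℝ) := (auxO lam δ Q) ×ˢ {1 - lam} with hR
  have hRsub : R ⊆ Q ×ˢ B := by
    intro z hz
    simp only [hR, auxO, Finset.mem_product, Finset.mem_filter, Finset.mem_singleton] at hz ⊢
    exact ⟨hz.1.1, hz.2 ▸ hB.one_mem⟩
  have himg : ((Q ×ˢ B) \ R).image (fun z => z.1 + δ * z.2) = auxStep δ Q B := by
    ext q
    simp only [auxStep, Finset.mem_image, Finset.mem_image₂, Finset.mem_sdiff, Finset.mem_product, Prod.exists]
    constructor
    · rintro ⟨p, b, ⟨⟨hp, hb⟩, -⟩, e⟩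
      exact ⟨p, hp, b, hb, e⟩
    · rintro ⟨p, hp, b, hb, e⟩
      by_cases hz : (p, b) ∈ R
      · simp only [hR, auxO, Finset.mem_product, Finset.mem_filter, Finset.mem_singleton] at hz
        refine ⟨p + δ * (1 - lam), 0, ⟨⟨hz.1.2, hB.zero_mem⟩, ?_⟩, ?_⟩
        · simp only [hR, Finset.mem_product, Finset.mem_singleton]
          intro h; linarith [h.2]
        · rw [← e, hz.2]; ring
      · exact ⟨p, b, ⟨⟨hp, hb⟩, hz⟩, e⟩
  have hinj : Set.InjOn (fun z : ℝ × ℝ => z.1 + δ * z.2) (((Q ×ˢ B) \ R : Finset (ℝ × ℝ)) : Set (ℝ × ℝ)) := by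
    have key : ∀ p b p' b', (p, b) ∈ (Q ×ˢ B) \ R → (p', b') ∈ (Q ×ˢ B) \ R →
        p + δ * b = p' + δ * b' → ¬ p < p' := by
      intro p b p' b' hz hz' e hlt
      simp only [Finset.mem_sdiff, Finset.mem_product] at hz hz'
      obtain ⟨e1, e2⟩ := hB.coinc hδ hQ hz.1.1 hz'.1.1 hz.1.2 hz'.1.2 hlt e
      apply hz.2
      simp only [hR, auxO, Finset.mem_product, Finset.mem_filter, Finset.mem_singleton]
      exact ⟨⟨hz.1.1, e1 ▸ hz'.1.1⟩, e2⟩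
    rintro ⟨p, b⟩ hz ⟨p', b'⟩ hz' e
    simp only [Finset.mem_coe] at hz hz' e
    have e1 : p = p' := le_antisymm (not_lt.1 (key _ _ _ _ hz' hz e.symm)) (not_lt.1 (key _ _ _ _ hz hz' e))
    subst e1
    have : δ * b = δ * b' := by linarith
    rw [mul_left_cancel₀ hδ.ne' this]
  have hc : R.card = (auxO lam δ Q).card := by rw [hR, Finset.card_product]; simp
  rw [← himg, Finset.card_image_of_injOn hinj, ← hc, Finset.card_sdiff_add_card_eq_card hRsub,
    Finset.card_product, hB.card, mul_comm]

lemma AuxB.cardO_step {lam : ℝ} {n m : ℕ} {B : Finset ℝ} (hB : AuxB lam n m B) {δ : ℝ} (hδ : 0 < δ)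
    {Q : Finset ℝ} (hQ : AuxGap lam δ Q) :
    (auxO lam (δ * lam) (auxStep δ Q B)).card = m * Q.card := by
  classical
  have h0 := hB.pos
  have h2 := hB.half
  set OB := B.filter fun b => b + lam * (1 - lam) ∈ B with hOB
  have himg : (Q ×ˢ OB).image (fun z => z.1 + δ * z.2) = auxO lam (δ * lam) (auxStep δ Q B) := by
    ext q
    simp only [auxO, auxStep, Finset.mem_image, Finset.mem_image₂, Finset.mem_filter, Finset.mem_product, Prod.exists, hOB]
    constructor
    · rintro ⟨p, b, ⟨hp, hb, hb2⟩, e⟩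
      refine ⟨⟨p, hp, b, hb, e⟩, p, hp, _, hb2, ?_⟩
      rw [← e]; ring
    · rintro ⟨⟨p, hp, b, hb, e⟩, p', hp', b', hb', e'⟩
      have hpos : 0 < δ * lam * (1 - lam) := by
        have : 0 < 1 - lam := by linarith
        positivity
      rcases lt_trichotomy p p' with h | h | h
      · rcases hB.core hδ hQ hp hp' hb hb' h with ⟨f, f1⟩ | ⟨f, f1⟩ | f
        · refine ⟨p', 0, ⟨hp', hB.zero_mem, ?_⟩, ?_⟩
          · have : δ * b' = δ * (0 + lam * (1 - lam)) := by
              rw [f1] at e; linarith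
            rw [← mul_left_cancel₀ hδ.ne' this]; exact hb'
          · rw [← e, f, f1]; ring
        · refine ⟨p, b, ⟨hp, hb, ?_⟩, e⟩
          have : δ * (b + lam * (1 - lam)) = δ * (1 - lam) := by
            rw [f1] at e'; linarith
          rw [mul_left_cancel₀ hδ.ne' this]; exact hB.one_mem
        · exfalso
          have : 0 < δ * lam * lam := by positivity
          linarith
      · subst h
        refine ⟨p, b, ⟨hp, hb, ?_⟩, e⟩
        have : δ * (b + lam * (1 - lam)) = δ * b' := by linarith
        rw [mul_left_cancel₀ hδ.ne' this]; exact hb'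
      · exfalso
        have hpos : 0 < δ * lam := by positivity
        rcases hB.core hδ hQ hp' hp hb' hb h with ⟨f, f1⟩ | ⟨f, f1⟩ | f
        · have := mul_nonneg hδ.le (hB.nonneg b hb)
          rw [f1] at e'; linarith
        · have := mul_le_mul_of_nonneg_left (hB.le b' hb') hδ.le
          rw [f1] at e; linarith
        · linarith
  have hinj : Set.InjOn (fun z : ℝ × ℝ => z.1 + δ * z.2) ((Q ×ˢ OB : Finset (ℝ × ℝ)) : Set (ℝ × ℝ)) := by
    have key : ∀ p b p' b', (p, b) ∈ Q ×ˢ OB → (p', b') ∈ Q ×ˢ OB →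
        p + δ * b = p' + δ * b' → ¬ p < p' := by
      intro p b p' b' hz hz' e hlt
      simp only [Finset.mem_product, hOB, Finset.mem_filter] at hz hz'
      obtain ⟨e1, e2⟩ := hB.coinc hδ hQ hz.1 hz'.1 hz.2.1 hz'.2.1 hlt e
      have := hB.le _ hz.2.2
      have : 0 < lam * (1 - lam) := mul_pos h0 (by linarith)
      linarith
    rintro ⟨p, b⟩ hz ⟨p', b'⟩ hz' e
    simp only [Finset.mem_coe] at hz hz' e
    have e1 : p = p' := le_antisymm (not_lt.1 (key _ _ _ _ hz' hz e.symm)) (not_lt.1 (key _ _ _ _ hz hz' e))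
    subst e1
    have : δ * b = δ * b' := by linarith
    rw [mul_left_cancel₀ hδ.ne' this]
  rw [← himg, Finset.card_image_of_injOn hinj, Finset.card_product, hB.cardO, mul_comm]

noncomputable def auxP (lam : ℝ) (B : Finset ℝ) : ℕ → Finset ℝ
  | 0 => {0}
  | j + 1 => auxStep (lam ^ j) (auxP lam B j) B

lemma AuxB.gapP {lam : ℝ} {n m : ℕ} {B : Finset ℝ} (hB : AuxB lam n m B) (j : ℕ) :
    AuxGap lam (lam ^ j) (auxP lam B j) := by
  induction j with
  | zero =>
    intro p hp p' hp' hlt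
    simp only [auxP, Finset.mem_singleton] at hp hp'
    rw [hp, hp'] at hlt
    exact absurd hlt (lt_irrefl _)
  | succ j ih =>
    rw [pow_succ]
    exact hB.gap_step (pow_pos hB.pos _) ih

open Classical in
noncomputable def auxN (lam : ℝ) (B : Finset ℝ) (j : ℕ) (A : Set ℝ) : ℕ :=
  ((auxP lam B j).filter fun p => p ∈ A).card

open Classical in
noncomputable def auxM (lam : ℝ) (B : Finset ℝ) (j : ℕ) (A : Set ℝ) : ℕ :=
  ((auxO lam (lam ^ j) (auxP lam B j)).filter fun p => p ∈ A).card

noncomputable def auxMu (lam : ℝ) (B : Finset ℝ) (x : ℝ) (j : ℕ) (A : Set ℝ) : ℝ :=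
  x ^ j * (auxN lam B j A - auxM lam B j A * x)

lemma auxM_le (lam : ℝ) (B : Finset ℝ) (j : ℕ) (A : Set ℝ) : auxM lam B j A ≤ auxN lam B j A := by
  classical
  unfold auxM auxN
  apply Finset.card_le_card
  apply Finset.filter_subset_filter
  exact Finset.filter_subset _ _

lemma auxMu_union (lam : ℝ) (B : Finset ℝ) (x : ℝ) (j : ℕ) {ι : Type*} (s : Finset ι) (A : ι → Set ℝ)
    (hd : ∀ i i', i ≠ i' → Disjoint (A i) (A i')) :
    auxMu lam B x j (⋃ i ∈ s, A i) = ∑ i ∈ s, auxMu lam B x j (A i) := by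
  classical
  have h : ∀ R : Finset ℝ, (R.filter fun p => p ∈ ⋃ i ∈ s, A i).card =
      ∑ i ∈ s, (R.filter fun p => p ∈ A i).card := by
    intro R
    rw [← Finset.card_biUnion]
    · congr 1
      ext p
      simp only [Finset.mem_filter, Finset.mem_biUnion, Set.mem_iUnion]
      constructor
      · rintro ⟨h1, i, hi, h2⟩; exact ⟨i, hi, h1, h2⟩
      · rintro ⟨i, hi, h1, h2⟩; exact ⟨h1, i, hi, h2⟩
    · intro i _ i' _ hne
      rw [Function.onFun, Finset.disjoint_left]
      intro p hp hp'
      simp only [Finset.mem_filter] at hp hp'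
      exact Set.disjoint_left.1 (hd i i' hne) hp.2 hp'.2
  unfold auxMu
  rw [← Finset.mul_sum, Finset.sum_sub_distrib, ← Finset.sum_mul]
  congr 2
  · unfold auxN
    rw [← Nat.cast_sum]
    congr 1
    convert h _
  · unfold auxM
    rw [← Nat.cast_sum]
    congr 2
    convert h _

/-- `A` is isolated in `E` at scale `lam ^ j`. -/
def AuxIso (lam : ℝ) (E : Set ℝ) (j : ℕ) (A : Set ℝ) : Prop :=
  ∀ a ∈ A, ∀ e ∈ E, |a - e| ≤ lam ^ j → e ∈ A

lemma AuxB.mu_step {lam : ℝ} {n m : ℕ} {B : Finset ℝ} (hB : AuxB lam n m B) (x : ℝ)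
    (hx : n * x - m * x ^ 2 = 1) (E : Set ℝ) (hPE : ∀ j, ∀ p ∈ auxP lam B j, p ∈ E) (j : ℕ) (A : Set ℝ)
    (hA : AuxIso lam E j A) : auxMu lam B x (j + 1) A = auxMu lam B x j A := by
  classical
  have h0 := hB.pos
  have h2 := hB.half
  have hpj : 0 < lam ^ j := pow_pos h0 j
  have near : ∀ p b, b ∈ B → |p - (p + lam ^ j * b)| ≤ lam ^ j := by
    intro p b hb
    have e : p - (p + lam ^ j * b) = -(lam ^ j * b) := by ring
    have hb0 := hB.nonneg b hb
    have hb1 := hB.le b hb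
    rw [e, abs_neg, abs_of_nonneg (by positivity)]
    nlinarith
  set Q := (auxP lam B j).filter fun p => p ∈ A with hQ
  have hQgap : AuxGap lam (lam ^ j) Q := by
    intro p hp p' hp'
    exact hB.gapP j p (Finset.mem_filter.1 hp).1 p' (Finset.mem_filter.1 hp').1
  have e1 : (auxP lam B (j + 1)).filter (fun p => p ∈ A) = auxStep (lam ^ j) Q B := by
    ext q
    simp only [Finset.mem_filter, auxStep, Finset.mem_image₂, hQ]
    constructor
    · rintro ⟨hq, hqA⟩
      have hqE := hPE _ _ hq
      simp only [auxP, auxStep, Finset.mem_image₂] at hq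
      obtain ⟨p, hp, b, hb, rfl⟩ := hq
      refine ⟨p, ⟨hp, ?_⟩, b, hb, rfl⟩
      apply hA _ hqA _ (hPE _ _ hp)
      rw [abs_sub_comm]; exact near p b hb
    · rintro ⟨p, ⟨hp, hpA⟩, b, hb, rfl⟩
      have hq : p + lam ^ j * b ∈ auxP lam B (j + 1) := by
        simp only [auxP, auxStep, Finset.mem_image₂]
        exact ⟨p, hp, b, hb, rfl⟩
      exact ⟨hq, hA _ hpA _ (hPE _ _ hq) (near p b hb)⟩
  have eO : ∀ k, AuxIso lam E k A → (auxO lam (lam ^ k) (auxP lam B k)).filter (fun p => p ∈ A)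
      = auxO lam (lam ^ k) ((auxP lam B k).filter fun p => p ∈ A) := by
    intro k hk
    ext p
    simp only [auxO, Finset.mem_filter]
    constructor
    · rintro ⟨⟨h1, h2'⟩, h3⟩
      refine ⟨⟨h1, h3⟩, h2', hk _ h3 _ (hPE _ _ h2') ?_⟩
      have hk0 : 0 < lam ^ k := pow_pos h0 k
      have e : p - (p + lam ^ k * (1 - lam)) = -(lam ^ k * (1 - lam)) := by ring
      have : 0 ≤ 1 - lam := by linarith
      rw [e, abs_neg, abs_of_nonneg (by positivity)]
      nlinarith
    · rintro ⟨⟨h1, h3⟩, h2', h4⟩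
      exact ⟨⟨h1, h2'⟩, h3⟩
  have hA' : AuxIso lam E (j + 1) A := fun a ha e he h =>
    hA a ha e he (h.trans (pow_le_pow_of_le_one h0.le (by linarith) (Nat.le_succ j)))
  have n1 : auxN lam B (j + 1) A + auxM lam B j A = n * auxN lam B j A := by
    have := hB.card_step hpj hQgap
    rw [← e1, hQ, ← eO j hA] at this
    unfold auxN auxM
    convert this
  have n2 : auxM lam B (j + 1) A = m * auxN lam B j A := by
    have := hB.cardO_step hpj hQgap
    rw [← pow_succ, ← e1, ← eO (j + 1) hA'] at this
    unfold auxN auxM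
    convert this
  have n1' : (auxN lam B (j + 1) A : ℝ) = n * auxN lam B j A - auxM lam B j A := by
    rw [eq_sub_iff_add_eq]; exact_mod_cast n1
  unfold auxMu
  rw [n1', n2]
  push_cast
  linear_combination x ^ j * (auxN lam B j A : ℝ) * hx

lemma AuxB.mu_eq {lam : ℝ} {n m : ℕ} {B : Finset ℝ} (hB : AuxB lam n m B) (x : ℝ)
    (hx : n * x - m * x ^ 2 = 1) (E : Set ℝ) (hPE : ∀ j, ∀ p ∈ auxP lam B j, p ∈ E) (j : ℕ) (A : Set ℝ)
    (hA : AuxIso lam E j A) (k : ℕ) (hk : j ≤ k) : auxMu lam B x k A = auxMu lam B x j A := by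
  induction k, hk using Nat.le_induction with
  | base => rfl
  | succ k hk ih =>
    rw [hB.mu_step x hx E hPE k A, ih]
    have h2 := hB.half
    exact fun a ha e he h =>
      hA a ha e he (h.trans (pow_le_pow_of_le_one hB.pos.le (by linarith) hk))

/-- a separated set in a short interval has few points -/
lemma aux_card_le (Q : Finset ℝ) (σ L : ℝ) (hσ : 0 < σ)
    (hsep : ∀ p ∈ Q, ∀ p' ∈ Q, p < p' → σ ≤ p' - p) (hdiam : ∀ p ∈ Q, ∀ p' ∈ Q, |p - p'| ≤ L * σ) :
    Q.card ≤ ⌊L⌋₊ + 1 := by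
  rcases Q.eq_empty_or_nonempty with rfl | hne
  · simp
  set a := Q.min' hne with ha
  have haQ : a ∈ Q := Q.min'_mem hne
  have hle : ∀ p ∈ Q, a ≤ p := fun p hp => Q.min'_le p hp
  rw [← Finset.card_range (⌊L⌋₊ + 1)]
  apply Finset.card_le_card_of_injOn (fun p => ⌊(p - a) / σ⌋₊)
  · intro p hp
    simp only [Finset.coe_range, Set.mem_Iio]
    rw [Nat.lt_succ_iff]
    apply Nat.floor_le_floor
    rw [div_le_iff₀ hσ]
    exact (le_abs_self _).trans (hdiam p hp a haQ)
  · have key : ∀ p ∈ Q, ∀ p' ∈ Q, ⌊(p - a) / σ⌋₊ = ⌊(p' - a) / σ⌋₊ → ¬ p < p' := by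
      intro p hp p' hp' e hlt
      have h1 := hsep p hp p' hp' hlt
      have h2 : (p - a) / σ + 1 ≤ (p' - a) / σ := by
        rw [← sub_nonneg]
        have : (p' - a) / σ - ((p - a) / σ + 1) = (p' - p - σ) / σ := by field_simp; ring
        rw [this]
        exact div_nonneg (by linarith) hσ.le
      have h3 : 0 ≤ (p - a) / σ := div_nonneg (by linarith [hle p hp]) hσ.le
      have h4 := Nat.floor_le_floor h2
      rw [Nat.floor_add_one h3] at h4
      omega
    intro p hp p' hp' e
    exact le_antisymm (not_lt.1 (key _ hp' _ hp e.symm)) (not_lt.1 (key _ hp _ hp' e))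

lemma aux_classA {lam : ℝ} {n m : ℕ} {E : Set ℝ} (hE : IsInClassA lam n m E) :
    ∃ B : Finset ℝ, AuxB lam n m B ∧ (∀ j, ∀ p ∈ auxP lam B j, p ∈ E) ∧
      (∀ j, ∀ e ∈ E, ∃ p ∈ auxP lam B j, |e - p| ≤ lam ^ j) := by
  classical
  obtain ⟨⟨h0, h1⟩, hm1, hnm, b, hb0, hbn, hmono, hvol, hcard, hne, hcomp, hEq⟩ := hE
  have hvolr : ∀ i, i + 1 < n → volume (Set.Icc (b i) (b i + lam) ∩ Set.Icc (b (i + 1)) (b (i + 1) + lam))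
      = ENNReal.ofReal (b i + lam - b (i + 1)) := by
    intro i hi
    have := hmono i hi
    rw [Set.Icc_inter_Icc, sup_eq_right.2 this.le, inf_eq_left.2 (by linarith), Real.volume_Icc]
  have hll : 0 < lam * lam := by positivity
  have hiff : ∀ i, i + 1 < n → (volume (Set.Icc (b i) (b i + lam) ∩ Set.Icc (b (i + 1)) (b (i + 1) + lam))
      = ENNReal.ofReal (lam * lam) ↔ b (i + 1) = b i + lam * (1 - lam)) := by
    intro i hi
    rw [hvolr i hi]
    constructor
    · intro h
      have hpos : 0 < b i + lam - b (i + 1) := by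
        by_contra hle
        rw [ENNReal.ofReal_of_nonpos (not_lt.1 hle)] at h
        have := ENNReal.ofReal_pos.2 hll
        rw [← h] at this
        exact lt_irrefl _ this
      rw [ENNReal.ofReal_eq_ofReal_iff hpos.le hll.le] at h
      linarith
    · intro h
      rw [h]; congr 1; ring
  have hcons : ∀ i, i + 1 < n → b (i + 1) = b i + lam * (1 - lam) ∨ lam ≤ b (i + 1) - b i := by
    intro i hi
    by_cases h : b (i + 1) ≤ b i + lam
    · have hmi := hmono i hi
      rcases hvol i hi ⟨b (i + 1), ⟨hmi.le, h⟩, le_refl _, by linarith⟩ with hv | hv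
      · right
        rw [hvolr i hi, ENNReal.ofReal_eq_zero] at hv
        linarith
      · left; exact (hiff i hi).1 hv
    · right; linarith
  have hset : {i : ℕ | i + 1 < n ∧
      volume (Set.Icc (b i) (b i + lam) ∩ Set.Icc (b (i + 1)) (b (i + 1) + lam)) =
        ENNReal.ofReal (lam * lam)} =
      (((Finset.range n).filter fun i => i + 1 < n ∧ b (i + 1) = b i + lam * (1 - lam) : Finset ℕ) : Set ℕ) := by
    ext i
    simp only [Set.mem_ofPred_eq, Finset.coe_filter, Finset.mem_range]
    constructor
    · rintro ⟨h1, h2⟩; exact ⟨by omega, h1, (hiff i h1).1 h2⟩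
    · rintro ⟨-, h1, h2⟩; exact ⟨h1, (hiff i h1).2 h2⟩
  rw [hset, Set.ncard_coe_finset] at hcard
  have hlt : ∀ k i, i + k + 1 < n → b i < b (i + k + 1) := by
    intro k
    induction k with
    | zero => intro i hi; exact hmono i hi
    | succ k ih => intro i hi; exact (ih i (by omega)).trans (hmono (i + k + 1) hi)
  have hlt' : ∀ i i', i < i' → i' < n → b i < b i' := by
    intro i i' h h'
    obtain ⟨k, rfl⟩ := Nat.exists_eq_add_of_lt h
    exact hlt k i h'
  have hle' : ∀ i i', i ≤ i' → i' < n → b i ≤ b i' := by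
    intro i i' h h'
    rcases h.eq_or_lt with rfl | h
    · exact le_refl _
    · exact (hlt' i i' h h').le
  have hltiff : ∀ i i', i < n → i' < n → b i < b i' → i < i' := by
    intro i i' h h' hb
    by_contra hc
    exact absurd (hle' i' i (not_lt.1 hc) h) (not_le.2 hb)
  have hhalf : lam ≤ 1 / 2 := by
    by_contra hc
    have hall : ∀ i, i + 1 < n → b (i + 1) = b i + lam * (1 - lam) := by
      intro i hi
      rcases hcons i hi with h | h
      · exact h
      · exfalso
        have h2 := hle' 0 i (by omega) (by omega)
        have h3 := hle' (i + 1) (n - 1) (by omega) (by omega)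
        rw [hb0] at h2
        rw [hbn] at h3
        linarith
    have : Finset.range (n - 1) ⊆ (Finset.range n).filter fun i => i + 1 < n ∧ b (i + 1) = b i + lam * (1 - lam) := by
      intro i hi
      simp only [Finset.mem_range, Finset.mem_filter] at hi ⊢
      exact ⟨by omega, by omega, hall i (by omega)⟩
    have := Finset.card_le_card this
    rw [hcard, Finset.card_range] at this
    omega
  have hl1 : 0 < lam * (1 - lam) := mul_pos h0 (by linarith)
  have hbig : ∀ i, i + 1 < n → lam * (1 - lam) ≤ b (i + 1) - b i := by
    intro i hi
    rcases hcons i hi with h | h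
    · linarith
    · nlinarith
  have hbig2 : ∀ i i', i + 2 ≤ i' → i' < n → 2 * (lam * (1 - lam)) ≤ b i' - b i := by
    intro i i' h h'
    have h3 := hbig i (by omega)
    have h4 := hbig (i + 1) (by omega)
    have h5 := hle' (i + 1 + 1) i' (by omega) h'
    linarith
  set B := (Finset.range n).image b with hBdef
  have hbB : ∀ i, i < n → b i ∈ B := fun i hi => Finset.mem_image_of_mem _ (Finset.mem_range.2 hi)
  have hBb : ∀ y ∈ B, ∃ i, i < n ∧ b i = y := by
    intro y hy
    obtain ⟨i, hi, e⟩ := Finset.mem_image.1 hy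
    exact ⟨i, Finset.mem_range.1 hi, e⟩
  have hinj : Set.InjOn b (Finset.range n : Set ℕ) := by
    intro i hi i' hi' e
    simp only [Finset.coe_range, Set.mem_Iio] at hi hi'
    rcases lt_trichotomy i i' with h | h | h
    · exact absurd e (hlt' _ _ h hi').ne
    · exact h
    · exact absurd e (hlt' _ _ h hi).ne'
  have hAB : AuxB lam n m B := by
    refine ⟨h0, hhalf, ?_, ?_, ?_, ?_, ?_, ?_, ?_⟩
    · rw [← hb0]; exact hbB 0 (by omega)
    · rw [← hbn]; exact hbB (n - 1) (by omega)
    · intro y hy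
      obtain ⟨i, hi, rfl⟩ := hBb y hy
      rw [← hb0]; exact hle' 0 i (by omega) hi
    · intro y hy
      obtain ⟨i, hi, rfl⟩ := hBb y hy
      rw [← hbn]; exact hle' i _ (by omega) (by omega)
    · intro y hy y' hy' hlt
      obtain ⟨i, hi, rfl⟩ := hBb y hy
      obtain ⟨i', hi', rfl⟩ := hBb y' hy'
      have hii := hltiff i i' hi hi' hlt
      rcases Nat.lt_or_ge (i + 1) i' with h | h
      · right
        have := hbig2 i i' h hi'
        nlinarith
      · obtain rfl : i' = i + 1 := by omega
        rcases hcons i hi' with h | h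
        · left; linarith
        · right; exact h
    · rw [hBdef, Finset.card_image_of_injOn hinj, Finset.card_range]
    · rw [← hcard]
      have : (B.filter fun b => b + lam * (1 - lam) ∈ B) = ((Finset.range n).filter fun i => i + 1 < n ∧ b (i + 1) = b i + lam * (1 - lam)).image b := by
        ext y
        simp only [Finset.mem_filter, Finset.mem_image]
        constructor
        · rintro ⟨hy, hy2⟩
          obtain ⟨i, hi, rfl⟩ := hBb y hy
          obtain ⟨i', hi', e⟩ := hBb _ hy2
          have hii := hltiff i i' hi hi' (by linarith)
          have : i' = i + 1 := by
            rcases Nat.lt_or_ge (i + 1) i' with h | h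
            · have := hbig2 i i' h hi'
              linarith
            · omega
          subst this
          exact ⟨i, ⟨Finset.mem_range.2 hi, hi', e⟩, rfl⟩
        · rintro ⟨i, ⟨hi, hi2, e⟩, rfl⟩
          exact ⟨hbB i (by omega), e ▸ hbB (i + 1) hi2⟩
      rw [this, Finset.card_image_of_injOn]
      exact hinj.mono (by intro i hi; exact (Finset.mem_filter.1 hi).1)
  have hEin : ∀ y ∈ B, ∀ e ∈ E, y + lam * e ∈ E := by
    intro y hy e he
    obtain ⟨i, hi, rfl⟩ := hBb y hy
    rw [hEq]
    simp only [Set.mem_iUnion]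
    exact ⟨i, Finset.mem_range.2 hi, e, he, by simp only []; ring⟩
  have hEout : ∀ e ∈ E, ∃ y ∈ B, ∃ e' ∈ E, e = y + lam * e' := by
    intro e he
    rw [hEq] at he
    simp only [Set.mem_iUnion] at he
    obtain ⟨i, hi, e', he', rfl⟩ := he
    exact ⟨b i, hbB i (Finset.mem_range.1 hi), e', he', by simp only []; ring⟩
  have hzero : (0 : ℝ) ∈ E := by
    obtain ⟨e, he⟩ := hne
    have hk : ∀ k : ℕ, lam ^ k * e ∈ E := by
      intro k
      induction k with
      | zero => simpa using he
      | succ k ih =>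
        have := hEin 0 hAB.zero_mem _ ih
        rw [zero_add] at this
        rw [pow_succ]
        convert this using 1
        ring
    have ht : Filter.Tendsto (fun k : ℕ => lam ^ k * e) Filter.atTop (nhds (0 * e)) :=
      (tendsto_pow_atTop_nhds_zero_of_lt_one h0.le h1).mul_const e
    rw [zero_mul] at ht
    exact hcomp.isClosed.mem_of_tendsto ht (Filter.Eventually.of_forall hk)
  have hub : ∀ e ∈ E, e ≤ 1 := by
    obtain ⟨M, hM, hM2⟩ := hcomp.exists_isGreatest hne
    obtain ⟨y, hy, e', he', e⟩ := hEout M hM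
    have g1 := hM2 he'
    have g2 := hAB.le y hy
    have g3 := mul_le_mul_of_nonneg_left g1 h0.le
    have : M ≤ 1 := by nlinarith
    intro e he
    exact (hM2 he).trans this
  have hlb : ∀ e ∈ E, 0 ≤ e := by
    obtain ⟨M, hM, hM2⟩ := hcomp.exists_isLeast hne
    obtain ⟨y, hy, e', he', e⟩ := hEout M hM
    have g1 := hM2 he'
    have g2 := hAB.nonneg y hy
    have g3 := mul_le_mul_of_nonneg_left g1 h0.le
    have : 0 ≤ M := by nlinarith
    intro e he
    exact this.trans (hM2 he)
  have hP : ∀ j, ∀ p ∈ auxP lam B j, ∀ e ∈ E, p + lam ^ j * e ∈ E := by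
    intro j
    induction j with
    | zero =>
      intro p hp e he
      simp only [auxP, Finset.mem_singleton] at hp
      subst hp
      simpa using he
    | succ j ih =>
      intro q hq e he
      simp only [auxP, auxStep, Finset.mem_image₂] at hq
      obtain ⟨p, hp, y, hy, rfl⟩ := hq
      have := ih p hp _ (hEin y hy e he)
      convert this using 1
      ring
  have hC : ∀ j, ∀ e ∈ E, ∃ p ∈ auxP lam B j, ∃ e' ∈ E, e = p + lam ^ j * e' := by
    intro j
    induction j with
    | zero =>
      intro e he
      exact ⟨0, by simp [auxP], e, he, by simp⟩
    | succ j ih =>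
      intro e he
      obtain ⟨p, hp, e', he', rfl⟩ := ih e he
      obtain ⟨y, hy, e'', he'', rfl⟩ := hEout e' he'
      refine ⟨p + lam ^ j * y, ?_, e'', he'', by ring⟩
      simp only [auxP, auxStep, Finset.mem_image₂]
      exact ⟨p, hp, y, hy, rfl⟩
  refine ⟨B, hAB, ?_, ?_⟩
  · intro j p hp
    have := hP j p hp 0 hzero
    simpa using this
  · intro j e he
    obtain ⟨p, hp, e', he', rfl⟩ := hC j e he
    refine ⟨p, hp, ?_⟩
    have g1 := hub e' he'
    have g2 := hlb e' he'
    have g3 : 0 < lam ^ j := pow_pos h0 j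
    rw [add_sub_cancel_left, abs_of_nonneg (by positivity)]
    nlinarith

lemma aux_exists_root (n m : ℕ) (hnm : m + 2 ≤ n) :
    ∃ x : ℝ, 0 < x ∧ x < 1 ∧ n * x - m * x ^ 2 = 1 := by
  have h : ((m : ℝ) + 2) ≤ n := by exact_mod_cast hnm
  have hc : ContinuousOn (fun y : ℝ => n * y - m * y ^ 2) (Set.Icc 0 1) := by fun_prop
  have := intermediate_value_Ioo (zero_le_one' ℝ) hc
  obtain ⟨x, hx, e⟩ := this (show (1 : ℝ) ∈ _ from ⟨by norm_num, by norm_num; linarith⟩)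
  exact ⟨x, hx.1, hx.2, e⟩

def auxG {X : Type*} {t : ℕ} (g : Fin t → X → X) : List (Fin t) → X → X
  | [] => id
  | j :: w => auxG g w ∘ g j

lemma aux_dust {X : Type*} [MetricSpace X] {t : ℕ} (ht : 0 < t) (g : Fin t → X → X) (r : Fin t → ℝ)
    (F : Set X) (hFc : IsCompact F)
    (hr : ∀ j, r j ∈ Set.Ioo (0 : ℝ) 1) (hg : ∀ j x y, dist (g j x) (g j y) = r j * dist x y)
    (hF : F = ⋃ j, g j '' F) (hd : ∀ j j', j ≠ j' → Disjoint (g j '' F) (g j' '' F)) :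
    (∀ w, auxG g w '' F ⊆ F) ∧
    (∀ w, auxG g w '' F = ⋃ j, auxG g (j :: w) '' F) ∧
    (∀ w j j', j ≠ j' → Disjoint (auxG g (j :: w) '' F) (auxG g (j' :: w) '' F)) ∧
    (∀ w x y, dist (auxG g w x) (auxG g w y) = (w.map r).prod * dist x y) ∧
    ∃ c : ℝ, 0 < c ∧ ∀ w, ∀ a ∈ auxG g w '' F, ∀ e ∈ F, e ∉ auxG g w '' F →
      c * (w.map r).prod ≤ dist a e := by
  have hR : ∀ w : List (Fin t), 0 < (w.map r).prod := by
    intro w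
    induction w with
    | nil => simp
    | cons a w ih => simp only [List.map_cons, List.prod_cons]; exact mul_pos (hr a).1 ih
  have hcons : ∀ j w, auxG g (j :: w) '' F = auxG g w '' (g j '' F) := by
    intro j w
    rw [auxG, Set.image_comp]
  have hun : ∀ w, auxG g w '' F = ⋃ j, auxG g (j :: w) '' F := by
    intro w
    conv_lhs => rw [hF]
    rw [Set.image_iUnion]
    simp only [hcons]
  have hgF : ∀ j, g j '' F ⊆ F := by
    intro j
    conv_rhs => rw [hF]
    exact Set.subset_iUnion (fun j => g j '' F) j
  have hsub : ∀ w, auxG g w '' F ⊆ F := by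
    intro w
    induction w with
    | nil => simp [auxG]
    | cons j w ih =>
      rw [hcons]
      exact (Set.image_mono (hgF j)).trans ih
  have hdist : ∀ w x y, dist (auxG g w x) (auxG g w y) = (w.map r).prod * dist x y := by
    intro w
    induction w with
    | nil => intro x y; simp [auxG]
    | cons j w ih =>
      intro x y
      simp only [auxG, Function.comp_apply, List.map_cons, List.prod_cons]
      rw [ih, hg]; ring
  have hinj : ∀ w, Function.Injective (auxG g w) := by
    intro w x y e
    have := hdist w x y
    rw [e, dist_self] at this
    rcases mul_eq_zero.1 this.symm with h | h
    · exact absurd h (hR w).ne'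
    · exact dist_eq_zero.1 h
  refine ⟨hsub, hun, ?_, hdist, ?_⟩
  · intro w j j' hne
    rw [hcons, hcons]
    exact (Set.disjoint_image_iff (hinj w)).2 (hd j j' hne)
  · have hcomp : ∀ j, IsCompact (g j '' F) := by
      intro j
      apply hFc.image
      have : LipschitzWith ⟨r j, (hr j).1.le⟩ (g j) := LipschitzWith.of_dist_le_mul fun x y => (hg j x y).le
      exact this.continuous
    have hpair : ∀ z : Fin t × Fin t, ∃ c : ℝ, 0 < c ∧ (z.1 ≠ z.2 → ∀ a ∈ g z.1 '' F, ∀ e ∈ g z.2 '' F, c ≤ dist a e) := by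
      rintro ⟨i, j⟩
      by_cases hij : i = j
      · exact ⟨1, one_pos, fun h => absurd hij h⟩
      · obtain ⟨c, hc, h⟩ := Metric.exists_pos_forall_lt_edist (hcomp i) (hcomp j).isClosed (hd i j hij)
        refine ⟨c, by exact_mod_cast hc, fun _ a ha e he => ?_⟩
        have := h a ha e he
        rw [edist_nndist] at this
        have h2 : c < nndist a e := by exact_mod_cast this
        rw [← coe_nndist]
        exact_mod_cast h2.le
    choose c hc hc2 using hpair
    haveI : Nonempty (Fin t × Fin t) := ⟨(⟨0, ht⟩, ⟨0, ht⟩)⟩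
    obtain ⟨z, hz⟩ := Finite.exists_min c
    refine ⟨c z, hc z, ?_⟩
    intro w
    induction w with
    | nil => intro a ha e he hne; simp [auxG] at hne; exact absurd he hne
    | cons j w ih =>
      intro a ha e he hne
      by_cases hew : e ∈ auxG g w '' F
      · rw [hcons] at ha hne
        obtain ⟨a', ha', rfl⟩ := ha
        obtain ⟨e', he', rfl⟩ := hew
        have hej : e' ∉ g j '' F := fun h => hne ⟨e', h, rfl⟩
        have he2 := he'
        rw [hF] at he2
        obtain ⟨i, hi⟩ := Set.mem_iUnion.1 he2
        have hji : j ≠ i := by rintro rfl; exact hej hi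
        have h1 := hc2 (j, i) hji a' ha' e' hi
        have h2 := hz (j, i)
        rw [hdist]
        simp only [List.map_cons, List.prod_cons]
        have h3 := hR w
        have h4 := (hr j).2
        have h5 := hc z
        calc c z * (r j * (w.map r).prod) = (c z * (w.map r).prod) * r j := by ring
          _ ≤ (c z * (w.map r).prod) * 1 := by
              apply mul_le_mul_of_nonneg_left h4.le; positivity
          _ = (w.map r).prod * c z := by ring
          _ ≤ _ := mul_le_mul_of_nonneg_left (h2.trans h1) h3.le
      · have ha' : a ∈ auxG g w '' F := by
          rw [hun]; exact Set.mem_iUnion.2 ⟨j, ha⟩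
        refine le_trans ?_ (ih a ha' e he hew)
        simp only [List.map_cons, List.prod_cons]
        have h3 := hR w
        have h4 := (hr j).2
        have h5 := hc z
        apply mul_le_mul_of_nonneg_left _ h5.le
        nlinarith

/-- If `E ∈ 𝒜(λ, n, m)` and `m` is not a perfect power, then `E` is not
Lipschitz equivalent to any dust-like self-similar set. -/
theorem not_lipEquiv_dustLike_of_not_perfectPower
    (lam : ℝ) (n m : ℕ) (E : Set ℝ) (hE : IsInClassA lam n m E)
    (hm : ¬ ∃ a i : ℕ, 2 ≤ i ∧ m = a ^ i) :
    ∀ (d : ℕ) (F : Set (EuclideanSpace ℝ (Fin d))), IsDustLike F → ¬ LipEquiv E F := by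
  classical
  intro d F hF hLip
  obtain ⟨hFne, hFc, t, ht, g, r, hr, hg, hFeq, hd⟩ := hF
  obtain ⟨hsub, hun, hdisj, hdist, c0, hc0, hsep⟩ := aux_dust (by omega) g r F hFc hr hg hFeq hd
  obtain ⟨f, hfb, C, hC, hf⟩ := hLip
  obtain ⟨B, hB, hPE, hcov⟩ := aux_classA hE
  have hm1 := hE.2.1
  have hnm := hE.2.2.1
  obtain ⟨x, hx0, hx1, hx⟩ := aux_exists_root n m hnm
  have hl0 := hB.pos
  have hl2 := hB.half
  have hl1 : lam < 1 := by linarith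
  obtain ⟨D, hD⟩ := Metric.isBounded_iff.1 hFc.isBounded
  set R : List (Fin t) → ℝ := fun w => (w.map r).prod with hRdef
  have hR : ∀ w, 0 < R w ∧ R w ≤ 1 := by
    intro w
    induction w with
    | nil => simp [hRdef]
    | cons a w ih =>
      simp only [hRdef, List.map_cons, List.prod_cons] at ih ⊢
      have := hr a
      exact ⟨mul_pos this.1 ih.1, mul_le_one₀ this.2.le ih.1.le ih.2⟩
  have hD0 : 0 ≤ D := by
    obtain ⟨y, hy⟩ := hFne
    exact dist_nonneg.trans (hD hy hy)
  set A : List (Fin t) → Set ℝ := fun w => {e | ∃ h : e ∈ E, (f ⟨e, h⟩ : EuclideanSpace ℝ (Fin d)) ∈ auxG g w '' F} with hA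
  have hAE : ∀ w, ∀ a ∈ A w, a ∈ E := fun w a ha => ha.1
  have hAne : ∀ w, (A w).Nonempty := by
    intro w
    obtain ⟨y, hy⟩ := hFne
    have hmem : auxG g w y ∈ F := hsub w ⟨y, hy, rfl⟩
    obtain ⟨e, he⟩ := hfb.2 ⟨_, hmem⟩
    exact ⟨e, e.2, by rw [Subtype.coe_eta, he]; exact ⟨y, hy, rfl⟩⟩
  have hAdiam : ∀ w, ∀ a ∈ A w, ∀ a' ∈ A w, |a - a'| ≤ C * D * R w := by
    rintro w a ⟨ha, y, hy, ey⟩ a' ⟨ha', y', hy', ey'⟩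
    have h1 := (hf ⟨a, ha⟩ ⟨a', ha'⟩).1
    rw [Subtype.dist_eq, Subtype.dist_eq, ← ey, ← ey', hdist, Real.dist_eq,
      inv_mul_le_iff₀ hC] at h1
    have h2 := hD hy hy'
    have h3 := (hR w).1
    have h4 : C * (R w * dist y y') ≤ C * (R w * D) := by gcongr
    calc _ ≤ _ := h1
      _ ≤ _ := h4
      _ = _ := by ring
  have hAsep : ∀ w, ∀ a ∈ A w, ∀ e ∈ E, e ∉ A w → c0 * R w ≤ C * |a - e| := by
    rintro w a ⟨ha, hfa⟩ e he hne
    have h1 := hsep w _ hfa (f ⟨e, he⟩) (f ⟨e, he⟩).2 (fun h => hne ⟨he, h⟩)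
    have h2 := (hf ⟨a, ha⟩ ⟨e, he⟩).2
    rw [Subtype.dist_eq, Subtype.dist_eq, Real.dist_eq] at h2
    exact h1.trans h2
  have hAun : ∀ w, A w = ⋃ j ∈ (Finset.univ : Finset (Fin t)), A (j :: w) := by
    intro w
    ext e
    simp only [hA, Set.mem_iUnion, Finset.mem_univ, exists_prop, true_and]
    constructor
    · rintro ⟨he, h⟩
      rw [hun] at h
      obtain ⟨j, hj⟩ := Set.mem_iUnion.1 h
      exact ⟨j, he, hj⟩
    · rintro ⟨j, he, h⟩
      refine ⟨he, ?_⟩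
      rw [hun]
      exact Set.mem_iUnion.2 ⟨j, h⟩
  have hAdisj : ∀ w j j', j ≠ j' → Disjoint (A (j :: w)) (A (j' :: w)) := by
    intro w j j' hne
    rw [Set.disjoint_left]
    rintro e ⟨he, h⟩ ⟨he', h'⟩
    exact Set.disjoint_left.1 (hdisj w j j' hne) h h'
  clear hA
  clear_value A
  set c1 : ℝ := min 1 (c0 / C) with hc1
  have hc10 : 0 < c1 := lt_min one_pos (div_pos hc0 hC)
  have hc11 : c1 ≤ 1 := min_le_left _ _
  have hc1C : C * c1 ≤ c0 := by
    have : c1 ≤ c0 / C := min_le_right _ _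
    rw [le_div_iff₀ hC] at this
    linarith
  have hk : ∀ w, ∃ k : ℕ, lam ^ (k + 1) < c1 * R w ∧ c1 * R w ≤ lam ^ k := by
    intro w
    have := hR w
    exact exists_nat_pow_near_of_lt_one (mul_pos hc10 this.1) (mul_le_one₀ hc11 this.1.le this.2) hl0 hl1
  choose k hk1 hk2 using hk
  have hiso : ∀ w, AuxIso lam E (k w + 1) (A w) := by
    intro w a ha e he h
    by_contra hne
    have h1 := hAsep w a ha e he hne
    have h2 : |a - e| < c1 * R w := lt_of_le_of_lt h (hk1 w)
    have h3 : C * |a - e| < C * (c1 * R w) := mul_lt_mul_of_pos_left h2 hC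
    have h4 : C * c1 * R w ≤ c0 * R w := mul_le_mul_of_nonneg_right hc1C (hR w).1.le
    linarith
  set mw : List (Fin t) → ℝ := fun w => auxMu lam B x (k w + 1) (A w) with hmw
  have hsum : ∀ w, mw w = ∑ j, mw (j :: w) := by
    intro w
    set J := k w + 1 + ∑ j, (k (j :: w) + 1) with hJ
    have e1 : mw w = auxMu lam B x J (A w) :=
      (hB.mu_eq x hx E hPE _ _ (hiso w) J (by omega)).symm
    have e2 : ∀ j, mw (j :: w) = auxMu lam B x J (A (j :: w)) := by
      intro j
      have : k (j :: w) + 1 ≤ ∑ j, (k (j :: w) + 1) :=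
        Finset.single_le_sum (f := fun j => k (j :: w) + 1) (fun _ _ => Nat.zero_le _) (Finset.mem_univ j)
      exact (hB.mu_eq x hx E hPE _ _ (hiso (j :: w)) J (by omega)).symm
    rw [e1, hAun w, auxMu_union _ _ _ _ _ _ (hAdisj w)]
    exact Finset.sum_congr rfl fun j _ => (e2 j).symm
  set L : ℝ := C * D / (lam * c1 * (1 - lam)) with hL
  set N0 : ℕ := ⌊L⌋₊ + 1 with hN0
  have hRk : ∀ w, lam * c1 * R w ≤ lam ^ (k w + 1) := by
    intro w
    rw [pow_succ]
    have := mul_le_mul_of_nonneg_left (hk2 w) hl0.le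
    linarith
  have hNle : ∀ w, auxN lam B (k w + 1) (A w) ≤ N0 := by
    intro w
    have hpk : 0 < lam ^ (k w + 1) := pow_pos hl0 _
    unfold auxN
    apply aux_card_le _ (lam ^ (k w + 1) * (1 - lam)) L (mul_pos hpk (by linarith))
    · intro p hp p' hp' hlt
      rcases hB.gapP (k w + 1) p (Finset.mem_filter.1 hp).1 p' (Finset.mem_filter.1 hp').1 hlt with h | h
      · exact h.ge
      · refine le_trans ?_ h
        nlinarith
    · intro p hp p' hp'
      refine (hAdiam w p (Finset.mem_filter.1 hp).2 p' (Finset.mem_filter.1 hp').2).trans ?_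
      have h1 : 0 < 1 - lam := by linarith
      have h2 : L * (lam ^ (k w + 1) * (1 - lam)) = C * D * (lam ^ (k w + 1) / (lam * c1)) := by
        rw [hL]; field_simp
      rw [h2]
      apply mul_le_mul_of_nonneg_left _ (mul_nonneg hC.le hD0)
      rw [le_div_iff₀ (mul_pos hl0 hc10)]
      linarith [hRk w]
  have hNpos : ∀ w, 1 ≤ auxN lam B (k w + 1) (A w) := by
    intro w
    obtain ⟨a, ha⟩ := hAne w
    obtain ⟨p, hp, hap⟩ := hcov (k w + 1) a (hAE w a ha)
    unfold auxN
    rw [Nat.one_le_iff_ne_zero, ← Nat.pos_iff_ne_zero, Finset.card_pos]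
    exact ⟨p, Finset.mem_filter.2 ⟨hp, hiso w a ha p (hPE _ p hp) hap⟩⟩
  have hτlo : ∀ N M : ℕ, 1 ≤ N → M ≤ N → 1 - x ≤ (N : ℝ) - M * x := by
    intro N M h1 h2
    have h1' : (1 : ℝ) ≤ N := by exact_mod_cast h1
    have h2' : (M : ℝ) ≤ N := by exact_mod_cast h2
    nlinarith
  set T : Finset ℝ := (((Finset.range (N0 + 1)) ×ˢ (Finset.range (N0 + 1))).filter
    fun z => 1 ≤ z.1 ∧ z.2 ≤ z.1).image fun z => (z.1 : ℝ) - z.2 * x with hTdef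
  have hT2 : ∀ τ ∈ T, ∃ N M : ℕ, τ = N - M * x := by
    intro τ hτ
    obtain ⟨z, -, e⟩ := Finset.mem_image.1 hτ
    exact ⟨z.1, z.2, e.symm⟩
  have hT : ∀ τ ∈ T, 0 < τ := by
    intro τ hτ
    obtain ⟨z, hz, rfl⟩ := Finset.mem_image.1 hτ
    have hz2 := (Finset.mem_filter.1 hz).2
    have := hτlo z.1 z.2 hz2.1 hz2.2
    linarith
  have hty : ∀ w, ∃ k : ℕ, ∃ τ ∈ T, mw w = x ^ k * τ := by
    intro w
    refine ⟨k w + 1, auxN lam B (k w + 1) (A w) - auxM lam B (k w + 1) (A w) * x, ?_, rfl⟩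
    rw [hTdef, Finset.mem_image]
    refine ⟨(auxN lam B (k w + 1) (A w), auxM lam B (k w + 1) (A w)), ?_, rfl⟩
    have h1 := hNle w
    have h2 := hNpos w
    have h3 := auxM_le lam B (k w + 1) (A w)
    simp only [Finset.mem_filter, Finset.mem_product, Finset.mem_range]
    exact ⟨⟨by omega, by omega⟩, h2, h3⟩
  set s : ℝ := Real.logb lam x with hs
  have hs0 : 0 < s := Real.logb_pos_of_base_lt_one hl0 hl1 hx0 hx1
  have hxs : lam ^ s = x := Real.rpow_logb hl0 hl1.ne hx0
  have hxk : ∀ i : ℕ, x ^ i = (lam ^ i) ^ s := by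
    intro i
    rw [← hxs, ← Real.rpow_natCast, ← Real.rpow_natCast, ← Real.rpow_mul hl0.le, ← Real.rpow_mul hl0.le,
      mul_comm]
  set p : Fin t → ℝ := fun j => r j ^ s with hp
  have hp0 : ∀ j, 0 < p j := fun j => Real.rpow_pos_of_pos (hr j).1 s
  have hp1 : ∀ j, p j < 1 := fun j => Real.rpow_lt_one (hr j).1.le (hr j).2 hs0
  have hPR : ∀ w : List (Fin t), (w.map p).prod = R w ^ s := by
    intro w
    induction w with
    | nil => simp [hRdef]
    | cons a w ih =>
      have h1 : R (a :: w) = r a * R w := by simp [hRdef]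
      rw [h1, Real.mul_rpow (hr a).1.le (hR w).1.le, ← ih, List.map_cons, List.prod_cons]
  have hlo : ∀ w, ((lam * c1) ^ s * (1 - x)) * (w.map p).prod ≤ mw w := by
    intro w
    rw [hPR]
    have h1 := hτlo _ _ (hNpos w) (auxM_le lam B (k w + 1) (A w))
    have h2 : (lam * c1 * R w) ^ s ≤ x ^ (k w + 1) := by
      rw [hxk]
      exact Real.rpow_le_rpow (mul_nonneg (mul_nonneg hl0.le hc10.le) (hR w).1.le) (hRk w) hs0.le
    rw [Real.mul_rpow (mul_nonneg hl0.le hc10.le) (hR w).1.le] at h2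
    calc _ = (lam * c1) ^ s * R w ^ s * (1 - x) := by ring
      _ ≤ x ^ (k w + 1) * (1 - x) := mul_le_mul_of_nonneg_right h2 (by linarith)
      _ ≤ _ := mul_le_mul_of_nonneg_left h1 (pow_pos hx0 _).le
  have hhi : ∀ w, mw w ≤ (c1 ^ s * N0) * (w.map p).prod := by
    intro w
    rw [hPR]
    have h1 : (auxN lam B (k w + 1) (A w) : ℝ) - auxM lam B (k w + 1) (A w) * x ≤ N0 := by
      have h3 : (auxN lam B (k w + 1) (A w) : ℝ) ≤ N0 := by exact_mod_cast hNle w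
      have h4 : 0 ≤ (auxM lam B (k w + 1) (A w) : ℝ) * x := by positivity
      linarith
    have h2 : x ^ (k w + 1) ≤ (c1 * R w) ^ s := by
      rw [hxk]
      exact Real.rpow_le_rpow (pow_pos hl0 _).le (hk1 w).le hs0.le
    rw [Real.mul_rpow hc10.le (hR w).1.le] at h2
    calc mw w ≤ x ^ (k w + 1) * N0 := mul_le_mul_of_nonneg_left h1 (pow_pos hx0 _).le
      _ ≤ (c1 ^ s * R w ^ s) * N0 := mul_le_mul_of_nonneg_right h2 (Nat.cast_nonneg _)
      _ = _ := by ring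
  have hc2 : 0 < (lam * c1) ^ s * (1 - x) :=
    mul_pos (Real.rpow_pos_of_pos (mul_pos hl0 hc10) s) (by linarith)
  obtain ⟨hps, hrel⟩ := aux_analysis p hp0 mw hsum _ _ hc2 hlo hhi x hx0 hx1 T hT hty
  exact aux_algebra n m hm1 hnm hm x hx0 hx1 hx (by omega) p hp0 hp1 hps T hT hT2 hrel
end

section
/- Let E belong to the class A(λ,n,m) and let F = ⋃_{j=1}^t g_j(F) be a dust-like self-similar set, where g_j has contraction ratio r_j, such that E and F are Lipschitz equivalent. Then there exist a ratio r ∈ (0,1) and positive integers k and k₁ ≤ k₂ ≤ ⋯ ≤ k_t such that λ = r^k and r_j = r^{k_j} for every j = 1, …, t. Equivalently, log r_j / log λ ∈ ℚ for every j. -/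
open MeasureTheory Polynomial

open Set Filter Topology in
/-- Moran exponent. -/
theorem aux_exists_exponent {t : ℕ} (ht : 2 ≤ t) (r : Fin t → ℝ)
    (hr : ∀ j, r j ∈ Set.Ioo (0 : ℝ) 1) : ∃ s : ℝ, 0 < s ∧ ∑ j, r j ^ s = 1 := by
  have hcont : Continuous (fun s : ℝ => ∑ j, r j ^ s) := by
    refine continuous_finsetSum _ fun j _ => ?_
    exact Real.continuous_const_rpow (hr j).1.ne'
  have hlim : Tendsto (fun s : ℝ => ∑ j, r j ^ s) atTop (𝓝 (∑ _j : Fin t, (0:ℝ))) := by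
    refine tendsto_finsetSum _ fun j _ => ?_
    exact tendsto_rpow_atTop_of_base_lt_one _ (by linarith [(hr j).1]) (hr j).2
  simp only [Finset.sum_const_zero] at hlim
  obtain ⟨u, hu, hu0⟩ := ((hlim.eventually_lt_const one_pos).and (eventually_gt_atTop 0)).exists
  have h0 : (1:ℝ) < ∑ j, r j ^ (0:ℝ) := by
    simp only [Real.rpow_zero, Finset.sum_const, Finset.card_univ, Fintype.card_fin, nsmul_eq_mul, mul_one]
    exact_mod_cast ht
  obtain ⟨s, hs, hs1⟩ := intermediate_value_Icc' hu0.le hcont.continuousOn ⟨hu.le, h0.le⟩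
  refine ⟨s, lt_of_le_of_ne hs.1 ?_, hs1⟩
  rintro rfl
  simp only at hs1
  linarith

/-- Cylinders of the dust-like set. -/
def auxCyl {X : Type*} {t : ℕ} (g : Fin t → X → X) (F : Set X) : List (Fin t) → Set X
  | [] => F
  | j :: w => g j '' auxCyl g F w

/-- Ratio of a word. -/
def auxR {t : ℕ} (r : Fin t → ℝ) (w : List (Fin t)) : ℝ := (w.map r).prod

section dust
set_option linter.unusedSectionVars false
open Set Filter Topology
variable {X : Type*} [MetricSpace X] {t : ℕ} {g : Fin t → X → X} {F : Set X} {r : Fin t → ℝ}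

theorem auxR_nil : auxR r [] = 1 := by simp [auxR]
theorem auxR_cons (j) (w) : auxR r (j :: w) = r j * auxR r w := by simp [auxR]
theorem auxR_snoc (j) (w) : auxR r (w ++ [j]) = auxR r w * r j := by simp [auxR]
theorem auxR_pos (hr : ∀ j, r j ∈ Set.Ioo (0 : ℝ) 1) (w) : 0 < auxR r w := by
  induction w with
  | nil => simp [auxR]
  | cons j w ih => rw [auxR_cons]; exact mul_pos (hr j).1 ih
theorem auxR_le_one (hr : ∀ j, r j ∈ Set.Ioo (0 : ℝ) 1) (w) : auxR r w ≤ 1 := by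
  induction w with
  | nil => simp [auxR]
  | cons j w ih => rw [auxR_cons]; exact mul_le_one₀ (hr j).2.le (auxR_pos hr w).le ih

theorem auxCyl_snoc (hF : F = ⋃ j, g j '' F) (w) :
    auxCyl g F w = ⋃ j, auxCyl g F (w ++ [j]) := by
  induction w with
  | nil => simpa [auxCyl] using hF
  | cons j w ih =>
    simp only [auxCyl, List.cons_append]
    conv_lhs => rw [ih]
    rw [image_iUnion]

theorem aux_g_inj (hr : ∀ j, r j ∈ Set.Ioo (0 : ℝ) 1)
    (hg : ∀ j x y, dist (g j x) (g j y) = r j * dist x y) (j) : Function.Injective (g j) := by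
  intro x y h
  have := hg j x y
  rw [h, dist_self] at this
  have h2 := (mul_eq_zero.1 this.symm).resolve_left (hr j).1.ne'
  exact dist_eq_zero.1 h2

theorem auxCyl_disj (hr : ∀ j, r j ∈ Set.Ioo (0 : ℝ) 1)
    (hg : ∀ j x y, dist (g j x) (g j y) = r j * dist x y)
    (hsep : ∀ j j', j ≠ j' → Disjoint (g j '' F) (g j' '' F)) (w) {j j'} (h : j ≠ j') :
    Disjoint (auxCyl g F (w ++ [j])) (auxCyl g F (w ++ [j'])) := by
  induction w with
  | nil => simpa [auxCyl] using hsep j j' h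
  | cons k w ih =>
    simp only [auxCyl, List.cons_append]
    exact (disjoint_image_iff (aux_g_inj hr hg k)).2 ih

theorem auxCyl_subset (hF : F = ⋃ j, g j '' F) (w) : auxCyl g F w ⊆ F := by
  induction w with
  | nil => simp [auxCyl]
  | cons k w ih =>
    simp only [auxCyl]
    conv_rhs => rw [hF]
    exact (image_mono ih).trans (subset_iUnion (fun j => g j '' F) k)

theorem aux_g_lip (hr : ∀ j, r j ∈ Set.Ioo (0 : ℝ) 1)
    (hg : ∀ j x y, dist (g j x) (g j y) = r j * dist x y) (j) :
    LipschitzWith (r j).toNNReal (g j) := by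
  refine LipschitzWith.of_dist_le_mul fun x y => ?_
  rw [hg, Real.coe_toNNReal _ (hr j).1.le]

theorem auxCyl_compact (hr : ∀ j, r j ∈ Set.Ioo (0 : ℝ) 1)
    (hg : ∀ j x y, dist (g j x) (g j y) = r j * dist x y) (hFc : IsCompact F) (w) :
    IsCompact (auxCyl g F w) := by
  induction w with
  | nil => simpa [auxCyl]
  | cons k w ih => exact ih.image (aux_g_lip hr hg k).continuous

theorem auxCyl_nonempty (hFc : F.Nonempty) (w) : (auxCyl g F w).Nonempty := by
  induction w with
  | nil => simpa [auxCyl]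
  | cons k w ih => exact ih.image _

theorem auxCyl_dist (hr : ∀ j, r j ∈ Set.Ioo (0 : ℝ) 1)
    (hg : ∀ j x y, dist (g j x) (g j y) = r j * dist x y) {B : ℝ}
    (hB : ∀ x ∈ F, ∀ y ∈ F, dist x y ≤ B) (w) :
    ∀ x ∈ auxCyl g F w, ∀ y ∈ auxCyl g F w, dist x y ≤ auxR r w * B := by
  induction w with
  | nil => simpa [auxCyl, auxR]
  | cons k w ih =>
    rintro _ ⟨x, hx, rfl⟩ _ ⟨y, hy, rfl⟩
    rw [hg, auxR_cons, mul_assoc]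
    exact mul_le_mul_of_nonneg_left (ih x hx y hy) (hr k).1.le

theorem aux_exists_sep (hr : ∀ j, r j ∈ Set.Ioo (0 : ℝ) 1)
    (hg : ∀ j x y, dist (g j x) (g j y) = r j * dist x y) (hFc : IsCompact F)
    (hsep : ∀ j j', j ≠ j' → Disjoint (g j '' F) (g j' '' F)) :
    ∃ δ : ℝ, 0 < δ ∧ ∀ j j', j ≠ j' → ∀ x ∈ g j '' F, ∀ y ∈ g j' '' F, δ ≤ dist x y := by
  have key : ∀ p : Fin t × Fin t, ∃ δ : ℝ, 0 < δ ∧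
      (p.1 ≠ p.2 → ∀ x ∈ g p.1 '' F, ∀ y ∈ g p.2 '' F, δ ≤ dist x y) := by
    rintro ⟨j, j'⟩
    by_cases h : j = j'
    · exact ⟨1, one_pos, fun h' => absurd h h'⟩
    have hc : ∀ j, IsCompact (g j '' F) := fun j => hFc.image (aux_g_lip hr hg j).continuous
    obtain ⟨δ, hδ, hd⟩ := Metric.exists_pos_forall_lt_edist (hc j) (hc j').isClosed (hsep j j' h)
    refine ⟨δ, hδ, fun _ x hx y hy => ?_⟩
    have := hd x hx y hy
    rw [edist_nndist, ENNReal.coe_lt_coe] at this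
    exact_mod_cast this.le
  choose δ hδ hd using key
  obtain ⟨ε, hε, hle⟩ : ∃ ε : ℝ, 0 < ε ∧ ∀ p, ε ≤ δ p := by
    rcases isEmpty_or_nonempty (Fin t × Fin t) with h | h
    · exact ⟨1, one_pos, fun j => (IsEmpty.false j).elim⟩
    · obtain ⟨j0, hj0⟩ := Finite.exists_min δ
      exact ⟨δ j0, hδ j0, hj0⟩
  exact ⟨ε, hε, fun j j' h x hx y hy => (hle (j, j')).trans (hd (j, j') h x hx y hy)⟩

theorem auxCyl_sep (hr : ∀ j, r j ∈ Set.Ioo (0 : ℝ) 1)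
    (hg : ∀ j x y, dist (g j x) (g j y) = r j * dist x y) (hF : F = ⋃ j, g j '' F)
    {δ : ℝ} (hδ : 0 < δ)
    (hd : ∀ j j', j ≠ j' → ∀ x ∈ g j '' F, ∀ y ∈ g j' '' F, δ ≤ dist x y) (w) :
    ∀ x ∈ auxCyl g F w, ∀ y ∈ F, y ∉ auxCyl g F w → δ * auxR r w ≤ dist x y := by
  induction w with
  | nil => intro x _ y hy h; exact absurd hy h
  | cons k w ih =>
    rintro _ ⟨x, hx, rfl⟩ y hy hny
    rw [hF] at hy
    obtain ⟨j, y, hy', rfl⟩ := mem_iUnion.1 hy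
    by_cases h : k = j
    · subst h
      rw [hg, auxR_cons, mul_left_comm]
      refine mul_le_mul_of_nonneg_left (ih x hx y hy' fun h => hny ⟨y, h, rfl⟩) (hr k).1.le
    · refine le_trans ?_ (hd k j h _ ⟨x, auxCyl_subset hF w hx, rfl⟩ _ ⟨y, hy', rfl⟩)
      exact mul_le_of_le_one_right hδ.le (auxR_le_one hr _)

theorem auxCyl_cover (hF : F = ⋃ j, g j '' F) (k : ℕ) :
    F ⊆ ⋃ v : Fin k → Fin t, auxCyl g F (List.ofFn v) := by
  induction k with
  | zero => intro x hx; exact mem_iUnion.2 ⟨Fin.elim0, by simpa [auxCyl] using hx⟩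
  | succ k ih =>
    intro x hx
    rw [hF] at hx
    obtain ⟨j, y, hy, rfl⟩ := mem_iUnion.1 hx
    obtain ⟨v, hv⟩ := mem_iUnion.1 (ih hy)
    refine mem_iUnion.2 ⟨Fin.cons j v, ?_⟩
    rw [List.ofFn_cons]
    exact ⟨y, hv, rfl⟩

theorem aux_exists_max (hr : ∀ j, r j ∈ Set.Ioo (0 : ℝ) 1) :
    ∃ ρ : ℝ, 0 ≤ ρ ∧ ρ < 1 ∧ ∀ w, auxR r w ≤ ρ ^ w.length := by
  obtain ⟨ρ, h1, h2⟩ : ∃ ρ : ℝ, ρ < 1 ∧ ∀ j, r j ≤ ρ := by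
    rcases isEmpty_or_nonempty (Fin t) with h | h
    · exact ⟨0, one_pos, fun j => (IsEmpty.false j).elim⟩
    · obtain ⟨j0, hj0⟩ := Finite.exists_max r
      exact ⟨r j0, (hr j0).2, hj0⟩
  refine ⟨max ρ 0, le_max_right _ _, by simp [h1], fun w => ?_⟩
  induction w with
  | nil => simp [auxR]
  | cons k w ih =>
    rw [auxR_cons, List.length_cons, pow_succ']
    exact mul_le_mul ((h2 k).trans (le_max_left _ _)) ih (auxR_pos hr w).le (le_max_right _ _)

theorem aux_exists_min (hr : ∀ j, r j ∈ Set.Ioo (0 : ℝ) 1) :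
    ∃ ρ : ℝ, 0 < ρ ∧ ρ ≤ 1 ∧ ∀ j, ρ ≤ r j := by
  rcases isEmpty_or_nonempty (Fin t) with h | h
  · exact ⟨1, one_pos, le_rfl, fun j => (IsEmpty.false j).elim⟩
  · obtain ⟨j0, hj0⟩ := Finite.exists_min r
    exact ⟨r j0, (hr j0).1, (hr j0).2.le, hj0⟩

variable [MeasurableSpace X] [BorelSpace X]

theorem auxCyl_hausdorff (hr : ∀ j, r j ∈ Set.Ioo (0 : ℝ) 1)
    (hg : ∀ j x y, dist (g j x) (g j y) = r j * dist x y) {s : ℝ} (hs : 0 < s) (w) :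
    μH[s] (auxCyl g F w) ≤ ENNReal.ofReal (auxR r w ^ s) * μH[s] F := by
  induction w with
  | nil => simp [auxCyl, auxR]
  | cons k w ih =>
    refine ((aux_g_lip hr hg k).hausdorffMeasure_image_le hs.le _).trans ?_
    rw [auxR_cons, Real.mul_rpow (hr k).1.le (auxR_pos hr w).le,
      ENNReal.ofReal_mul (Real.rpow_nonneg (hr k).1.le _), mul_assoc]
    refine mul_le_mul' ?_ ih
    rw [← ENNReal.ofReal_rpow_of_pos (hr k).1]
    rfl

theorem aux_hausdorff_lt_top (hr : ∀ j, r j ∈ Set.Ioo (0 : ℝ) 1)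
    (hg : ∀ j x y, dist (g j x) (g j y) = r j * dist x y) (hFc : IsCompact F)
    (hF : F = ⋃ j, g j '' F) {s : ℝ} (hs : 0 < s) (hsum : ∑ j, r j ^ s = 1) :
    μH[s] F < ⊤ := by
  obtain ⟨B, hB⟩ := Metric.isBounded_iff.1 hFc.isBounded
  obtain ⟨B, hB0, hB⟩ : ∃ B : ℝ, 0 ≤ B ∧ ∀ x ∈ F, ∀ y ∈ F, dist x y ≤ B :=
    ⟨max B 0, le_max_right _ _, fun x hx y hy => (hB hx hy).trans (le_max_left _ _)⟩
  obtain ⟨ρ, hρ0, hρ1, hρ⟩ := aux_exists_max hr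
  have hdiam : ∀ w, Metric.ediam (auxCyl g F w) ≤ ENNReal.ofReal (auxR r w * B) := by
    intro w
    refine Metric.ediam_le fun x hx y hy => ?_
    rw [edist_dist]
    exact ENNReal.ofReal_le_ofReal (auxCyl_dist hr hg hB w x hx y hy)
  have hle := Measure.hausdorffMeasure_le_liminf_sum (ι := fun k : ℕ => (Fin k → Fin t)) s F
    (l := atTop) (fun k => ENNReal.ofReal (ρ ^ k * B))
    (by
      have h1 : Tendsto (fun k : ℕ => ρ ^ k * B) atTop (𝓝 (0 * B)) :=
        (tendsto_pow_atTop_nhds_zero_of_lt_one hρ0 hρ1).mul_const _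
      have h2 := ENNReal.tendsto_ofReal h1
      simpa using h2)
    (fun k v => auxCyl g F (List.ofFn v))
    (Eventually.of_forall fun k v => (hdiam _).trans (ENNReal.ofReal_le_ofReal
      (mul_le_mul_of_nonneg_right (by simpa using hρ (List.ofFn v)) hB0)))
    (Eventually.of_forall fun k => auxCyl_cover hF k)
  refine hle.trans_lt ?_
  have hbd : ∀ k : ℕ, ∑ v : Fin k → Fin t, Metric.ediam (auxCyl g F (List.ofFn v)) ^ s
      ≤ ENNReal.ofReal (B ^ s) := by
    intro k
    calc ∑ v : Fin k → Fin t, Metric.ediam (auxCyl g F (List.ofFn v)) ^ s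
        ≤ ∑ v : Fin k → Fin t, ENNReal.ofReal ((∏ i, r (v i) ^ s) * B ^ s) := by
          refine Finset.sum_le_sum fun v _ => ?_
          refine (ENNReal.rpow_le_rpow (hdiam _) hs.le).trans ?_
          rw [ENNReal.ofReal_rpow_of_nonneg (mul_nonneg (auxR_pos hr _).le hB0) hs.le,
            Real.mul_rpow (auxR_pos hr _).le hB0,
            Real.finsetProd_rpow _ _ (fun i _ => (hr _).1.le)]
          simp [auxR, List.map_ofFn, List.prod_ofFn]
      _ = ENNReal.ofReal (∑ v : Fin k → Fin t, (∏ i, r (v i) ^ s) * B ^ s) := by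
          rw [ENNReal.ofReal_sum_of_nonneg]
          intro v _
          exact mul_nonneg (Finset.prod_nonneg fun i _ => Real.rpow_nonneg (hr _).1.le _)
            (Real.rpow_nonneg hB0 _)
      _ = ENNReal.ofReal (B ^ s) := by
          rw [← Finset.sum_mul, ← Fintype.sum_pow (fun j => r j ^ s), hsum]
          simp
  refine lt_of_le_of_lt (liminf_le_of_frequently_le' (Frequently.of_forall hbd)) ENNReal.ofReal_lt_top

theorem aux_hausdorff_pos (hr : ∀ j, r j ∈ Set.Ioo (0 : ℝ) 1)
    (hg : ∀ j x y, dist (g j x) (g j y) = r j * dist x y) (hFc : IsCompact F)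
    (hFne : F.Nonempty)
    (hF : F = ⋃ j, g j '' F) (hsep : ∀ j j', j ≠ j' → Disjoint (g j '' F) (g j' '' F))
    {s : ℝ} (hs : 0 < s) (hsum : ∑ j, r j ^ s = 1) :
    0 < μH[s] F := by
  obtain ⟨δ, hδ, hd⟩ := aux_exists_sep hr hg hFc hsep
  obtain ⟨ρ, hρ0, hρ1, hρ⟩ := aux_exists_max hr
  obtain ⟨η, hη0, hη1, hη⟩ := aux_exists_min hr
  -- prefixes
  set pre : (ℕ → Fin t) → ℕ → List (Fin t) := fun ω k => (List.range k).map ω with hpre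
  have hpre0 : ∀ ω, pre ω 0 = [] := fun ω => by simp [hpre]
  have hpres : ∀ ω k, pre ω (k + 1) = pre ω k ++ [ω k] := fun ω k => by
    simp [hpre, List.range_succ]
  have hprel : ∀ ω k, (pre ω k).length = k := fun ω k => by simp [hpre]
  have hmono : ∀ ω k, auxCyl g F (pre ω (k + 1)) ⊆ auxCyl g F (pre ω k) := by
    intro ω k
    rw [auxCyl_snoc hF (pre ω k), hpres]
    exact subset_iUnion (fun j => auxCyl g F (pre ω k ++ [j])) (ω k)
  -- coding map
  have hcode : ∀ ω, ∃ x, ∀ k, x ∈ auxCyl g F (pre ω k) := by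
    intro ω
    have := IsCompact.nonempty_iInter_of_sequence_nonempty_isCompact_isClosed
      (fun k => auxCyl g F (pre ω k)) (hmono ω) (fun k => auxCyl_nonempty hFne _)
      (auxCyl_compact hr hg hFc _) (fun k => (auxCyl_compact hr hg hFc _).isClosed)
    obtain ⟨x, hx⟩ := this
    exact ⟨x, mem_iInter.1 hx⟩
  choose π hπ using hcode
  have hinj : ∀ ω ω' k, π ω' ∈ auxCyl g F (pre ω k) → pre ω' k = pre ω k := by
    intro ω ω' k
    induction k with
    | zero => intro _; rw [hpre0, hpre0]
    | succ k ih =>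
      intro h
      have h1 := ih (hmono ω k h)
      rw [hpres, hpres, h1]
      by_contra hne
      have hne' : ω' k ≠ ω k := fun h => hne (by rw [h])
      have h2 := hπ ω' (k + 1)
      rw [hpres, h1] at h2
      rw [hpres] at h
      exact disjoint_left.1 (auxCyl_disj hr hg hsep (pre ω k) hne') h2 h
  -- measure
  let μ0 : Measure (Fin t) := ∑ j, ENNReal.ofReal (r j ^ s) • Measure.dirac j
  have hμ0 : ∀ j, μ0 {j} = ENNReal.ofReal (r j ^ s) := by
    intro j
    simp only [μ0, Measure.finsetSum_apply, Measure.smul_apply, smul_eq_mul]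
    rw [Finset.sum_eq_single j]
    · simp
    · intro i _ hij
      simp [hij]
    · simp
  have hprob : IsProbabilityMeasure μ0 := by
    refine ⟨?_⟩
    simp only [μ0, Measure.finsetSum_apply, Measure.smul_apply, smul_eq_mul, measure_univ, mul_one]
    rw [← ENNReal.ofReal_sum_of_nonneg (fun j _ => Real.rpow_nonneg (hr j).1.le _), hsum]
    simp
  let ν : Measure (ℕ → Fin t) := Measure.infinitePi (fun _ => μ0)
  have hν : ∀ ω k, ν {ω' | pre ω' k = pre ω k} = ENNReal.ofReal (auxR r (pre ω k) ^ s) := by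
    intro ω k
    have h1 : {ω' | pre ω' k = pre ω k} = Set.pi (Finset.range k : Set ℕ) (fun i => {ω i}) := by
      ext ω'
      simp [hpre, Set.mem_pi]
    rw [h1, Measure.infinitePi_pi _ (fun i _ => measurableSet_singleton _)]
    simp only [hμ0]
    rw [← ENNReal.ofReal_prod_of_nonneg (fun i _ => Real.rpow_nonneg (hr _).1.le _),
      Real.finsetProd_rpow _ _ (fun i _ => (hr _).1.le)]
    congr 2
    simp only [auxR, hpre, List.map_map]
    clear h1
    induction k with
    | zero => simp
    | succ k ih => rw [Finset.prod_range_succ, ih, List.range_succ]; simp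
  have hν1 : ν univ = 1 := measure_univ
  -- key bound
  have hkey : ∀ (U : Set X) (a : ℝ), Metric.ediam U < ENNReal.ofReal a →
      ν (π ⁻¹' U) ≤ ENNReal.ofReal ((a / (δ * η)) ^ s) := by
    intro U a ha
    have ha0 : 0 < a := by
      by_contra h
      rw [ENNReal.ofReal_of_nonpos (not_lt.1 h)] at ha
      exact not_lt_bot ha
    rcases (π ⁻¹' U).eq_empty_or_nonempty with h | ⟨ω, hω⟩
    · simp [h]
    by_cases hbig : δ * η ≤ a
    · refine (measure_mono (subset_univ _)).trans ?_
      rw [hν1, ← ENNReal.ofReal_one]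
      refine ENNReal.ofReal_le_ofReal (Real.one_le_rpow ?_ hs.le)
      rw [le_div_iff₀ (by positivity)]
      linarith
    push Not at hbig
    have hex : ∃ k, δ * auxR r (pre ω k) < a := by
      have : Tendsto (fun k : ℕ => δ * ρ ^ k) atTop (𝓝 (δ * 0)) :=
        (tendsto_pow_atTop_nhds_zero_of_lt_one hρ0 hρ1).const_mul _
      rw [mul_zero] at this
      obtain ⟨k, hk⟩ := (this.eventually_lt_const ha0).exists
      refine ⟨k, lt_of_le_of_lt (mul_le_mul_of_nonneg_left ?_ hδ.le) hk⟩
      simpa [hprel] using hρ (pre ω k)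
    classical
    obtain ⟨k, hk1, hk2⟩ : ∃ k, a ≤ δ * auxR r (pre ω k) ∧ δ * auxR r (pre ω (k + 1)) < a := by
      have h0 := Nat.find_spec hex
      have hm := fun m => @Nat.find_min _ _ hex m
      rcases hN : Nat.find hex with _ | k
      · rw [hN, hpre0, auxR_nil] at h0
        exfalso
        nlinarith
      · refine ⟨k, ?_, by rw [← hN]; exact h0⟩
        exact not_lt.1 (hm k (by omega))
    have hsub : π ⁻¹' U ⊆ {ω' | pre ω' k = pre ω k} := by
      intro ω' hω'
      refine hinj ω ω' k ?_
      by_contra hn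
      have h1 := auxCyl_sep hr hg hF hδ hd (pre ω k) (π ω) (hπ ω k) (π ω')
        (auxCyl_subset hF _ (hπ ω' 0)) hn
      have h2 := (Metric.edist_le_ediam_of_mem (s := U) hω hω').trans_lt ha
      rw [edist_dist, ENNReal.ofReal_lt_ofReal_iff ha0] at h2
      linarith
    refine (measure_mono hsub).trans ?_
    rw [hν]
    refine ENNReal.ofReal_le_ofReal (Real.rpow_le_rpow (auxR_pos hr _).le ?_ hs.le)
    rw [le_div_iff₀ (by positivity)]
    rw [hpres, auxR_snoc] at hk2
    have h3 := mul_le_mul_of_nonneg_left (hη (ω k)) (auxR_pos hr (pre ω k)).le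
    have h4 := mul_le_mul_of_nonneg_left h3 hδ.le
    linarith
  have hkey2 : ∀ (U : Set X), ν (π ⁻¹' U) ≤ ENNReal.ofReal ((1 / (δ * η)) ^ s) *
      Metric.ediam U ^ s := by
    intro U
    rcases eq_or_ne (Metric.ediam U) ⊤ with h | h
    · rw [h, ENNReal.top_rpow_of_pos hs, ENNReal.mul_top]
      · exact le_top
      · simp only [ne_eq, ENNReal.ofReal_eq_zero, not_le]
        positivity
    set e := (Metric.ediam U).toReal with he
    have he0 : 0 ≤ e := ENNReal.toReal_nonneg
    have hee : Metric.ediam U = ENNReal.ofReal e := (ENNReal.ofReal_toReal h).symm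
    have hc : Tendsto (fun a : ℝ => ENNReal.ofReal ((a / (δ * η)) ^ s)) (𝓝[>] e)
        (𝓝 (ENNReal.ofReal ((e / (δ * η)) ^ s))) := by
      refine Tendsto.mono_left ?_ nhdsWithin_le_nhds
      refine ENNReal.tendsto_ofReal ?_
      exact ((continuous_id.div_const _).rpow_const (fun _ => Or.inr hs.le)).tendsto e
    have hle : ν (π ⁻¹' U) ≤ ENNReal.ofReal ((e / (δ * η)) ^ s) := by
      refine ge_of_tendsto hc ?_
      filter_upwards [self_mem_nhdsWithin] with a ha
      refine hkey U a ?_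
      rw [hee, ENNReal.ofReal_lt_ofReal_iff (he0.trans_lt ha)]
      exact ha
    refine hle.trans (le_of_eq ?_)
    rw [hee, ENNReal.ofReal_rpow_of_nonneg he0 hs.le, ← ENNReal.ofReal_mul (by positivity),
      ← Real.mul_rpow (by positivity) he0]
    congr 2
    ring
  set c := ENNReal.ofReal ((1 / (δ * η)) ^ s) with hc
  have hc0 : c ≠ 0 := by
    simp only [hc, ne_eq, ENNReal.ofReal_eq_zero, not_le]
    positivity
  have hfin : 1 ≤ c * μH[s] F := by
    rw [Measure.hausdorffMeasure_apply]
    have h1 : c⁻¹ ≤ ⨅ (T : ℕ → Set X) (_ : F ⊆ ⋃ n, T n) (_ : ∀ n, Metric.ediam (T n) ≤ 1),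
          ∑' n, ⨆ _ : (T n).Nonempty, Metric.ediam (T n) ^ s := by
      refine le_iInf fun T => le_iInf fun hT => le_iInf fun _ => ?_
      rw [ENNReal.inv_le_iff_le_mul (fun _ => hc0) (fun h => absurd h ENNReal.ofReal_ne_top)]
      calc (1 : ENNReal) = ν univ := hν1.symm
        _ ≤ ν (⋃ n, π ⁻¹' (T n)) := by
          refine measure_mono fun ω _ => ?_
          obtain ⟨n, hn⟩ := mem_iUnion.1 (hT (auxCyl_subset hF _ (hπ ω 0)))
          exact mem_iUnion.2 ⟨n, hn⟩
        _ ≤ ∑' n, ν (π ⁻¹' (T n)) := measure_iUnion_le _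
        _ ≤ ∑' n, c * ⨆ _ : (T n).Nonempty, Metric.ediam (T n) ^ s := by
          refine ENNReal.tsum_le_tsum fun n => ?_
          rcases (T n).eq_empty_or_nonempty with h | h
          · simp [h]
          · refine (hkey2 (T n)).trans (mul_le_mul_right (le_iSup (fun _ : (T n).Nonempty => Metric.ediam (T n) ^ s) h) _)
        _ = _ := by rw [ENNReal.tsum_mul_left]
    have h2 := h1.trans (le_iSup₂ (f := fun (r : ENNReal) (_ : 0 < r) =>
        ⨅ (t : ℕ → Set X) (_ : F ⊆ ⋃ n, t n) (_ : ∀ n, Metric.ediam (t n) ≤ r),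
          ∑' n, ⨆ _ : (t n).Nonempty, Metric.ediam (t n) ^ s) 1 one_pos)
    rw [ENNReal.inv_le_iff_le_mul (fun _ => hc0) (fun h => absurd h ENNReal.ofReal_ne_top)] at h2
    exact h2
  by_contra h
  have : μH[s] F = 0 := by simpa using h
  rw [this, mul_zero] at hfin
  exact absurd hfin (by simp)
end dust

/-- Translation parts of the level `l` maps. -/
def auxPos (lam : ℝ) (B : Set ℝ) : ℕ → Set ℝ
  | 0 => {0}
  | l + 1 => {z | ∃ p ∈ auxPos lam B l, ∃ c ∈ B, z = p + lam ^ l * c}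

/-- The small neighbour set. -/
def auxT (lam : ℝ) : Set ℝ := {0, 1 - lam, -(1 - lam), 1, -1}

theorem auxT_step {lam : ℝ} {B : Set ℝ} (h0 : 0 < lam) (h2 : lam < 1 / 2)
    (hB : ∀ x ∈ B, 0 ≤ x ∧ x ≤ 1 - lam) (hB0 : (0:ℝ) ∈ B) (hB1 : 1 - lam ∈ B)
    (hgap : ∀ x ∈ B, ∀ y ∈ B, x < y → y - x = lam * (1 - lam) ∨ lam ≤ y - x)
    {d : ℝ} (hd : d ∈ auxT lam) {x y : ℝ} (hx : x ∈ B) (hy : y ∈ B)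
    (he : |(d + (x - y)) / lam| ≤ 1) : (d + (x - y)) / lam ∈ auxT lam := by
  have hl2 : lam < 2 * (lam * (1 - lam)) := by nlinarith
  have hlp : 0 < lam * (1 - lam) := by nlinarith
  have conv : ∀ e : ℝ, e = 0 ∨ e = lam * (1 - lam) ∨ e = -(lam * (1 - lam)) ∨ e = lam ∨ e = -lam →
      e / lam ∈ auxT lam := by
    intro e he
    simp only [auxT, Set.mem_insert_iff, Set.mem_singleton_iff]
    rcases he with rfl | rfl | rfl | rfl | rfl
    · left; simp
    · right; left; field_simp
    · right; right; left; field_simp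
    · right; right; right; left; field_simp
    · right; right; right; right; field_simp
  have key : ∀ x ∈ B, ∀ y ∈ B, (x = 0 ∨ x = lam * (1 - lam) ∨ lam ≤ x) ∧
      (1 - lam - y = 0 ∨ 1 - lam - y = lam * (1 - lam) ∨ lam ≤ 1 - lam - y) := by
    intro x hx y hy
    constructor
    · rcases (hB x hx).1.eq_or_lt with h | h
      · left; exact h.symm
      · right; simpa using hgap 0 hB0 x hx h
    · rcases (hB y hy).2.eq_or_lt with h | h
      · left; linarith
      · right; exact hgap y hy _ hB1 h
  rw [abs_div, abs_of_pos h0, div_le_one h0, abs_le] at he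
  apply conv
  have hx' := hB x hx
  have hy' := hB y hy
  obtain ⟨kx, ky⟩ := key x hx y hy
  obtain ⟨kx', ky'⟩ := key y hy x hx
  simp only [auxT, Set.mem_insert_iff, Set.mem_singleton_iff] at hd
  rcases hd with rfl | rfl | rfl | rfl | rfl
  · rcases lt_trichotomy x y with h | h | h
    · rcases hgap x hx y hy h with h' | h'
      · right; right; left; linarith
      · right; right; right; right; linarith
    · left; linarith
    · rcases hgap y hy x hx h with h' | h'
      · right; left; linarith
      · right; right; right; left; linarith
  · rcases kx with kx | kx | kx <;> rcases ky with ky | ky | ky <;>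
    first
      | (left; linarith)
      | (right; left; linarith)
      | (right; right; right; left; linarith)
  · rcases kx' with kx | kx | kx <;> rcases ky' with ky | ky | ky <;>
    first
      | (left; linarith)
      | (right; right; left; linarith)
      | (right; right; right; right; linarith)
  · right; right; right; left; linarith
  · right; right; right; right; linarith

theorem aux_finite_type {lam : ℝ} {B : Set ℝ} (hBf : B.Finite) (h0 : 0 < lam) (h2 : lam < 1 / 2)
    (hB : ∀ x ∈ B, 0 ≤ x ∧ x ≤ 1 - lam) (hB0 : (0:ℝ) ∈ B) (hB1 : 1 - lam ∈ B)
    (hgap : ∀ x ∈ B, ∀ y ∈ B, x < y → y - x = lam * (1 - lam) ∨ lam ≤ y - x) (K : ℝ) :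
    ∃ G : Set ℝ, G.Finite ∧ ∀ l, ∀ p ∈ auxPos lam B l, ∀ q ∈ auxPos lam B l,
      |(p - q) / lam ^ l| ≤ K → (p - q) / lam ^ l ∈ G := by
  -- one step
  set Φ : Set ℝ → Set ℝ := fun S => (fun z : ℝ × ℝ × ℝ => (z.1 + (z.2.1 - z.2.2)) / lam) ''
    (S ×ˢ (B ×ˢ B)) with hΦ
  have hΦf : ∀ S : Set ℝ, S.Finite → (Φ S).Finite := fun S hS =>
    (hS.prod (hBf.prod hBf)).image _
  have hstep : ∀ l, ∀ p ∈ auxPos lam B (l + 1), ∀ q ∈ auxPos lam B (l + 1),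
      ∃ p' ∈ auxPos lam B l, ∃ q' ∈ auxPos lam B l, ∃ x ∈ B, ∃ y ∈ B,
        (p - q) / lam ^ (l + 1) = ((p' - q') / lam ^ l + (x - y)) / lam := by
    rintro l p ⟨p', hp', x, hx, rfl⟩ q ⟨q', hq', y, hy, rfl⟩
    refine ⟨p', hp', q', hq', x, hx, y, hy, ?_⟩
    field_simp
    ring
  have hpred : ∀ (d x y K : ℝ), x ∈ B → y ∈ B → |(d + (x - y)) / lam| ≤ K →
      |d| ≤ 1 + lam * (K - 1) := by
    intro d x y K hx hy h
    rw [abs_div, abs_of_pos h0, div_le_iff₀ h0, abs_le] at h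
    have hx' := hB x hx
    have hy' := hB y hy
    rw [abs_le]
    constructor <;> nlinarith
  have hTf : (auxT lam).Finite := by simp [auxT]
  -- the gap η
  obtain ⟨η, hη, hηT⟩ : ∃ η : ℝ, 0 < η ∧ ∀ e ∈ Φ (auxT lam), |e| ≤ 1 + η → |e| ≤ 1 := by
    have hS : {e ∈ Φ (auxT lam) | 1 < |e|}.Finite := (hΦf _ hTf).subset (Set.sep_subset _ _)
    rcases Set.eq_empty_or_nonempty {e ∈ Φ (auxT lam) | 1 < |e|} with h | h
    · refine ⟨1, one_pos, fun e he _ => ?_⟩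
      by_contra hn
      have : e ∈ {e ∈ Φ (auxT lam) | 1 < |e|} := ⟨he, not_le.1 hn⟩
      rw [h] at this
      exact this
    · obtain ⟨e0, he0, hmin⟩ := Set.exists_min_image _ (fun e => |e|) hS h
      refine ⟨(|e0| - 1) / 2, by linarith [he0.2], fun e he hle => ?_⟩
      by_contra hn
      have := hmin e ⟨he, not_le.1 hn⟩
      have h3 : 1 < |e0| := he0.2
      linarith
  have hbase : ∀ l, ∀ p ∈ auxPos lam B l, ∀ q ∈ auxPos lam B l,
      |(p - q) / lam ^ l| ≤ 1 + η → (p - q) / lam ^ l ∈ auxT lam := by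
    intro l
    induction l with
    | zero =>
      rintro p hp q hq -
      simp only [auxPos, Set.mem_singleton_iff] at hp hq
      simp [hp, hq, auxT]
    | succ l ih =>
      intro p hp q hq hle
      obtain ⟨p', hp', q', hq', x, hx, y, hy, heq⟩ := hstep l p hp q hq
      rw [heq] at hle ⊢
      have h3 := hpred _ x y _ hx hy hle
      have h4 := ih p' hp' q' hq' (h3.trans (by nlinarith))
      refine auxT_step h0 h2 hB hB0 hB1 hgap h4 hx hy (hηT _ ⟨(_, x, y), ⟨h4, hx, hy⟩, rfl⟩ hle)
  have hiter : ∀ k : ℕ, ∀ K : ℝ, lam ^ k * (K - 1) ≤ η → ∃ G : Set ℝ, G.Finite ∧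
      ∀ l, ∀ p ∈ auxPos lam B l, ∀ q ∈ auxPos lam B l,
      |(p - q) / lam ^ l| ≤ K → (p - q) / lam ^ l ∈ G := by
    intro k
    induction k with
    | zero =>
      intro K hK
      refine ⟨auxT lam, hTf, fun l p hp q hq h => hbase l p hp q hq (h.trans ?_)⟩
      simp at hK
      linarith
    | succ k ih =>
      intro K hK
      obtain ⟨G, hG, hGm⟩ := ih (1 + lam * (K - 1)) (by
        rw [pow_succ] at hK; linarith)
      refine ⟨insert 0 (Φ G), (hΦf G hG).insert 0, ?_⟩
      rintro (_ | l) p hp q hq hle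
      · simp only [auxPos, Set.mem_singleton_iff] at hp hq
        simp [hp, hq]
      · right
        obtain ⟨p', hp', q', hq', x, hx, y, hy, heq⟩ := hstep l p hp q hq
        rw [heq] at hle ⊢
        exact ⟨(_, x, y), ⟨hGm l p' hp' q' hq' (hpred _ x y _ hx hy hle), hx, hy⟩, rfl⟩
  have hlim : Filter.Tendsto (fun k : ℕ => lam ^ k * (K - 1)) Filter.atTop (nhds (0 * (K - 1))) :=
    (tendsto_pow_atTop_nhds_zero_of_lt_one h0.le (by linarith)).mul_const _
  rw [zero_mul] at hlim
  obtain ⟨k, hk⟩ := (hlim.eventually_lt_const hη).exists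
  exact hiter k K hk.le

theorem auxPos_union {lam : ℝ} {B : Set ℝ} {E : Set ℝ}
    (hE : E = ⋃ c ∈ B, (fun x => lam * x + c) '' E) (l : ℕ) :
    E = ⋃ p ∈ auxPos lam B l, (fun x => lam ^ l * x + p) '' E := by
  induction l with
  | zero => simp [auxPos]
  | succ l ih =>
    apply Set.Subset.antisymm
    · intro z hz
      rw [ih] at hz
      simp only [Set.mem_iUnion] at hz ⊢
      obtain ⟨p, hp, x, hx, rfl⟩ := hz
      rw [hE] at hx
      simp only [Set.mem_iUnion] at hx
      obtain ⟨c, hc, y, hy, rfl⟩ := hx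
      refine ⟨p + lam ^ l * c, ⟨p, hp, c, hc, rfl⟩, y, hy, ?_⟩
      simp only
      ring
    · intro z hz
      simp only [Set.mem_iUnion] at hz
      obtain ⟨_, ⟨p, hp, c, hc, rfl⟩, y, hy, rfl⟩ := hz
      rw [ih]
      simp only [Set.mem_iUnion]
      refine ⟨p, hp, lam * y + c, ?_, ?_⟩
      · rw [hE]
        simp only [Set.mem_iUnion]
        exact ⟨c, hc, y, hy, rfl⟩
      · simp only
        ring

theorem aux_classA_s4 {lam : ℝ} {n m : ℕ} {E : Set ℝ} (h : IsInClassA lam n m E) :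
    ∃ B : Set ℝ, B.Finite ∧ 0 < lam ∧ lam < 1 / 2 ∧ (∀ x ∈ B, 0 ≤ x ∧ x ≤ 1 - lam) ∧
    (0:ℝ) ∈ B ∧ 1 - lam ∈ B ∧
    (∀ x ∈ B, ∀ y ∈ B, x < y → y - x = lam * (1 - lam) ∨ lam ≤ y - x) ∧
    E.Nonempty ∧ IsCompact E ∧ E = ⋃ c ∈ B, (fun x => lam * x + c) '' E := by
  obtain ⟨⟨h0, h1⟩, hm, hmn, b, hb0, hb1, hmono, hov, hcard, hne, hc, hE⟩ := h
  have hInterval : ∀ i, i + 1 < n →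
      Set.Icc (b i) (b i + lam) ∩ Set.Icc (b (i + 1)) (b (i + 1) + lam) =
        Set.Icc (b (i + 1)) (b i + lam) := by
    intro i hi
    rw [Set.Icc_inter_Icc, sup_of_le_right (hmono i hi).le,
      inf_of_le_left (by linarith [hmono i hi])]
  have hlp : 0 < lam * (1 - lam) := by nlinarith
  have hg1 : ∀ i, i + 1 < n → b (i + 1) - b i = lam * (1 - lam) ∨ lam ≤ b (i + 1) - b i := by
    intro i hi
    by_cases hlt : lam ≤ b (i + 1) - b i
    · exact Or.inr hlt
    left
    push Not at hlt
    have h3 := hov i hi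
    rw [hInterval i hi, Real.volume_Icc] at h3
    rcases h3 (Set.nonempty_Icc.2 (by linarith)) with h4 | h4
    · rw [ENNReal.ofReal_eq_zero] at h4
      linarith
    · rw [ENNReal.ofReal_eq_ofReal_iff (by linarith) (by positivity)] at h4
      linarith
  -- some gap is large
  obtain ⟨i0, hi0, hbig⟩ : ∃ i, i + 1 < n ∧ lam ≤ b (i + 1) - b i := by
    by_contra hcon
    push Not at hcon
    have hset : {i : ℕ | i + 1 < n ∧
      volume (Set.Icc (b i) (b i + lam) ∩ Set.Icc (b (i + 1)) (b (i + 1) + lam)) =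
        ENNReal.ofReal (lam * lam)} = (Finset.range (n - 1) : Set ℕ) := by
      ext i
      simp only [Set.mem_ofPred_eq, Finset.coe_range, Set.mem_Iio]
      constructor
      · rintro ⟨h, -⟩; omega
      · intro h
        have hi : i + 1 < n := by omega
        refine ⟨hi, ?_⟩
        rw [hInterval i hi, Real.volume_Icc]
        congr 1
        rcases hg1 i hi with h5 | h5
        · linarith
        · linarith [hcon i hi]
    rw [hset, Set.ncard_coe_finset, Finset.card_range] at hcard
    omega
  have hg2 : ∀ i, i + 1 < n → lam * (1 - lam) ≤ b (i + 1) - b i := by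
    intro i hi
    rcases hg1 i hi with h | h
    · exact h.ge
    · nlinarith
  have hbm : ∀ i k, i + k < n → k * (lam * (1 - lam)) ≤ b (i + k) - b i := by
    intro i k
    induction k with
    | zero => intro _; simp
    | succ k ih =>
      intro hk
      have h3 := ih (by omega)
      have h4 := hg2 (i + k) (by omega)
      push_cast
      rw [← add_assoc]
      linarith
  have hbm' : ∀ i j, i ≤ j → j < n → b i ≤ b j := by
    intro i j hij hj
    obtain ⟨k, rfl⟩ := Nat.exists_eq_add_of_le hij
    have := hbm i k hj
    have h5 : 0 ≤ (k:ℝ) * (lam * (1 - lam)) := by positivity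
    linarith
  have hhalf : lam < 1 / 2 := by
    -- total length is at least `lam + lam * (1 - lam)`
    have h5 : lam + lam * (1 - lam) ≤ 1 - lam := by
      have hA := hbm' 0 i0 (by omega) (by omega)
      have hB := hbm' (i0 + 1) (n - 1) (by omega) (by omega)
      rcases Nat.eq_zero_or_pos i0 with h | h
      · subst h
        have h6 := hbm' 2 (n - 1) (by omega) (by omega)
        have h7 := hg2 1 (by omega)
        norm_num at hbig h7
        linarith
      · have h6 := hbm' 1 i0 (by omega) (by omega)
        have h7 := hg2 0 (by omega)
        norm_num at h7
        linarith
    nlinarith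
  have hl2 : lam < 2 * (lam * (1 - lam)) := by nlinarith
  refine ⟨b '' (Finset.range n : Set ℕ), (Finset.finite_toSet _).image _, h0, hhalf, ?_,
    ⟨0, by simp; omega, hb0⟩, ⟨n - 1, by simp; omega, hb1⟩, ?_, hne, hc, ?_⟩
  · rintro _ ⟨i, hi, rfl⟩
    have hi' : i < n := by simpa using hi
    rw [← hb1]
    refine ⟨?_, hbm' i (n - 1) (by omega) (by omega)⟩
    rw [← hb0]
    exact hbm' 0 i (by omega) hi'
  · rintro _ ⟨i, hi, rfl⟩ _ ⟨j, hj, rfl⟩ hlt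
    have hi' : i < n := by simpa using hi
    have hj' : j < n := by simpa using hj
    have hij : i < j := by
      by_contra hcon
      exact absurd (hbm' j i (by omega) hi') (by linarith)
    rcases Nat.lt_or_ge (i + 1) j with h | h
    · right
      have h5 := hbm' (i + 2) j (by omega) hj'
      have h6 := hbm i 2 (by omega)
      push_cast at h6
      linarith
    · have : j = i + 1 := by omega
      subst this
      exact hg1 i hj'
  · rw [Set.biUnion_image]
    simpa using hE

theorem aux_rigidity {t : ℕ} {r : Fin t → ℝ} (hr : ∀ j, r j ∈ Set.Ioo (0 : ℝ) 1)
    {s : ℝ} (hs : 0 < s) (hsum : ∑ j, r j ^ s = 1) {lam : ℝ} (hl0 : 0 < lam)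
    (M : List (Fin t) → ℝ) (hM0 : 0 < M []) (C : ℝ)
    (hadd : ∀ w, M w = ∑ j, M (w ++ [j])) (hub : ∀ w, M w ≤ C * auxR r w ^ s)
    (V : Set ℝ) (hV : V.Finite)
    (hfin : ∀ w, ∃ l : ℕ, (∃ a ∈ V, M w = (lam ^ l) ^ s * a) ∧
      ∀ j, ∃ a ∈ V, M (w ++ [j]) = (lam ^ l) ^ s * a) (j : Fin t) :
    ∃ k z : ℤ, k ≠ 0 ∧ k * Real.log (r j) = z * Real.log lam := by
  set ρ : List (Fin t) → ℝ := fun w => M w / auxR r w ^ s with hρ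
  have hRs : ∀ w, 0 < auxR r w ^ s := fun w => Real.rpow_pos_of_pos (auxR_pos hr w) _
  have hrs : ∀ j, 0 < r j ^ s := fun j => Real.rpow_pos_of_pos (hr j).1 _
  have hRsn : ∀ w j, auxR r (w ++ [j]) ^ s = auxR r w ^ s * r j ^ s := fun w j => by
    rw [auxR_snoc, Real.mul_rpow (auxR_pos hr w).le (hr j).1.le]
  have hρadd : ∀ w, ∑ j, r j ^ s * ρ (w ++ [j]) = ρ w := by
    intro w
    simp only [hρ]
    rw [hadd w, Finset.sum_div]
    refine Finset.sum_congr rfl fun j _ => ?_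
    rw [hRsn]
    have := (hRs w).ne'
    have := (hrs j).ne'
    field_simp
  have hbdd : BddAbove (Set.range ρ) := by
    refine ⟨C, ?_⟩
    rintro _ ⟨w, rfl⟩
    simp only [hρ]
    rw [div_le_iff₀ (hRs w)]
    exact hub w
  set Q : Set ℝ := (fun z : ℝ × ℝ × Fin t => z.1 / z.2.1 / r z.2.2 ^ s) '' (V ×ˢ (V ×ˢ Set.univ))
    with hQ
  have hQf : Q.Finite := (hV.prod (hV.prod Set.finite_univ)).image _
  have hratio : ∀ w j, ρ (w ++ [j]) / ρ w ∈ Q := by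
    intro w j
    obtain ⟨l, ⟨a, ha, hMa⟩, h2⟩ := hfin w
    obtain ⟨a', ha', hMa'⟩ := h2 j
    refine ⟨(a', a, j), ⟨ha', ha, trivial⟩, ?_⟩
    simp only [hρ]
    rw [hMa, hMa', hRsn]
    have h3 : 0 < (lam ^ l) ^ s := Real.rpow_pos_of_pos (pow_pos hl0 _) _
    have := h3.ne'
    have := (hRs w).ne'
    have := (hrs j).ne'
    by_cases h0 : a = 0
    · simp [h0]
    · field_simp
  obtain ⟨ε, hε, hεQ⟩ : ∃ ε : ℝ, 0 < ε ∧ ∀ q ∈ Q, q < 1 + ε → q ≤ 1 := by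
    have hS : {e ∈ Q | 1 < e}.Finite := hQf.subset (Set.sep_subset _ _)
    rcases Set.eq_empty_or_nonempty {e ∈ Q | 1 < e} with h | h
    · refine ⟨1, one_pos, fun e he _ => ?_⟩
      by_contra hn
      have : e ∈ {e ∈ Q | 1 < e} := ⟨he, not_le.1 hn⟩
      rw [h] at this
      exact this
    · obtain ⟨e0, he0, hmin⟩ := Set.exists_min_image _ (fun e => e) hS h
      refine ⟨e0 - 1, by linarith [he0.2], fun e he hle => ?_⟩
      by_contra hn
      have := hmin e ⟨he, not_le.1 hn⟩
      linarith
  set S := sSup (Set.range ρ) with hSdef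
  have hle : ∀ w, ρ w ≤ S := fun w => le_csSup hbdd ⟨w, rfl⟩
  have hSpos : 0 < S := lt_of_lt_of_le (div_pos hM0 (hRs [])) (hle [])
  obtain ⟨_, ⟨w0, rfl⟩, hw0⟩ := exists_lt_of_lt_csSup (Set.range_nonempty ρ)
    (show S / (1 + ε) < sSup (Set.range ρ) from div_lt_self hSpos (by linarith))
  have hconst : ∀ w, S / (1 + ε) < ρ w → ∀ j, ρ (w ++ [j]) = ρ w := by
    intro w hw
    have hwpos : 0 < ρ w := lt_trans (by positivity) hw
    have h1 : ∀ j, ρ (w ++ [j]) ≤ ρ w := by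
      intro j
      have h2 := hεQ _ (hratio w j) (by
        rw [div_lt_iff₀ hwpos]
        rw [div_lt_iff₀ (by linarith)] at hw
        linarith [hle (w ++ [j])])
      rwa [div_le_one hwpos] at h2
    have h3 : ∑ j, r j ^ s * (ρ w - ρ (w ++ [j])) = 0 := by
      simp only [mul_sub, Finset.sum_sub_distrib]
      rw [← Finset.sum_mul, hsum, hρadd]
      ring
    intro j
    have h4 := (Finset.sum_eq_zero_iff_of_nonneg (fun j _ =>
      mul_nonneg (hrs j).le (sub_nonneg.2 (h1 j)))).1 h3 j (Finset.mem_univ j)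
    have h5 := (mul_eq_zero.1 h4).resolve_left (hrs j).ne'
    linarith
  set W : ℕ → List (Fin t) := fun k => w0 ++ List.replicate k j with hW
  have hWs : ∀ k, W (k + 1) = W k ++ [j] := fun k => by
    simp only [hW, List.append_assoc, List.replicate_succ']
  have hρW : ∀ k, ρ (W k) = ρ w0 := by
    intro k
    induction k with
    | zero => simp [hW]
    | succ k ih =>
      rw [hWs, hconst (W k) (by rw [ih]; exact hw0), ih]
  have hρ0 : 0 < ρ w0 := lt_trans (by positivity) hw0
  have hRW : ∀ k, auxR r (W k) = auxR r w0 * r j ^ k := fun k => by simp [hW, auxR]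
  choose l hl _ using hfin
  choose a haV ha using hl
  have hMW : ∀ k, M (W k) = ρ w0 * auxR r (W k) ^ s := fun k => by
    rw [← hρW k]
    simp only [hρ]
    rw [div_mul_cancel₀ _ (hRs _).ne']
  have hapos : ∀ k, 0 < a (W k) := by
    intro k
    have h1 : 0 < M (W k) := by rw [hMW]; exact mul_pos hρ0 (hRs _)
    rw [ha] at h1
    exact (pos_iff_pos_of_mul_pos h1).1 (Real.rpow_pos_of_pos (pow_pos hl0 _) _)
  have hlog : ∀ k, Real.log (ρ w0) + s * (Real.log (auxR r w0) + k * Real.log (r j)) =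
      s * (l (W k) * Real.log lam) + Real.log (a (W k)) := by
    intro k
    have h1 := ha (W k)
    rw [hMW] at h1
    have h2 := congrArg Real.log h1
    rw [Real.log_mul hρ0.ne' (hRs _).ne', Real.log_rpow (auxR_pos hr _),
      Real.log_mul (Real.rpow_pos_of_pos (pow_pos hl0 _) _).ne' (hapos k).ne',
      Real.log_rpow (pow_pos hl0 _), Real.log_pow, hRW,
      Real.log_mul (auxR_pos hr _).ne' (pow_pos (hr j).1 _).ne', Real.log_pow] at h2
    exact h2
  have : Finite V := hV
  obtain ⟨k, k', hne, heq⟩ := Finite.exists_ne_map_eq_of_infinite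
    (fun k : ℕ => (⟨a (W k), haV _⟩ : V))
  have heq' : a (W k) = a (W k') := congrArg Subtype.val heq
  refine ⟨(k:ℤ) - k', (l (W k) : ℤ) - l (W k'), by omega, ?_⟩
  have e1 := hlog k
  have e2 := hlog k'
  rw [← heq'] at e2
  have e3 : s * (((k:ℝ) - k') * Real.log (r j)) =
      s * (((l (W k) : ℝ) - l (W k')) * Real.log lam) := by linarith
  push_cast
  exact mul_left_cancel₀ hs.ne' e3

theorem aux_final {t : ℕ} {r : Fin t → ℝ} (hr : ∀ j, r j ∈ Set.Ioo (0 : ℝ) 1)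
    {lam : ℝ} (hl0 : 0 < lam) (hl1 : lam < 1)
    (h : ∀ j, ∃ k z : ℤ, k ≠ 0 ∧ k * Real.log (r j) = z * Real.log lam) :
    (∃ r₀ : ℝ, r₀ ∈ Set.Ioo (0 : ℝ) 1 ∧ ∃ k : ℕ, 0 < k ∧ ∃ ks : Fin t → ℕ,
      (∀ j, 0 < ks j) ∧ lam = r₀ ^ k ∧ ∀ j, r j = r₀ ^ ks j) ∧
    ∀ j, ∃ q : ℚ, Real.log (r j) / Real.log lam = (q : ℝ) := by
  have hll : Real.log lam < 0 := Real.log_neg hl0 hl1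
  have hq : ∀ j, ∃ q : ℚ, Real.log (r j) / Real.log lam = (q : ℝ) := by
    intro j
    obtain ⟨k, z, hk, he⟩ := h j
    refine ⟨z / k, ?_⟩
    have : (k : ℝ) ≠ 0 := by exact_mod_cast hk
    push_cast
    rw [div_eq_div_iff hll.ne this]
    linarith
  refine ⟨?_, hq⟩
  choose q hq using hq
  have hqpos : ∀ j, 0 < q j := by
    intro j
    have : (0:ℝ) < q j := by
      rw [← hq]
      exact div_pos_of_neg_of_neg (Real.log_neg (hr j).1 (hr j).2) hll
    exact_mod_cast this
  set N : ℕ := ∏ j, (q j).den with hN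
  have hNpos : 0 < N := Finset.prod_pos fun j _ => (q j).den_pos
  have hks : ∀ j, ∃ c : ℕ, (c : ℚ) = q j * N := by
    intro j
    obtain ⟨d, hd⟩ : (q j).den ∣ N := Finset.dvd_prod_of_mem _ (Finset.mem_univ j)
    refine ⟨(q j).num.toNat * d, ?_⟩
    have h1 : ((q j).num.toNat : ℤ) = (q j).num := Int.toNat_of_nonneg (Rat.num_pos.2 (hqpos j)).le
    have h2 : (((q j).num.toNat : ℤ) : ℚ) = (q j).num := by rw [h1]
    rw [hd]
    push_cast at h2 ⊢
    rw [h2, ← mul_assoc, Rat.mul_den_eq_num]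
  choose ks hks using hks
  have hNR : (0:ℝ) < N := by exact_mod_cast hNpos
  refine ⟨lam ^ ((1:ℝ) / N), ⟨Real.rpow_pos_of_pos hl0 _, Real.rpow_lt_one hl0.le hl1 (by positivity)⟩,
    N, hNpos, ks, ?_, ?_, ?_⟩
  · intro j
    have : (0:ℚ) < ks j := by
      rw [hks]
      exact mul_pos (hqpos j) (by exact_mod_cast hNpos)
    exact_mod_cast this
  · rw [← Real.rpow_natCast, ← Real.rpow_mul hl0.le, one_div, inv_mul_cancel₀ hNR.ne', Real.rpow_one]
  · intro j
    have h1 : (ks j : ℝ) = q j * N := by exact_mod_cast hks j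
    rw [← Real.rpow_natCast, ← Real.rpow_mul hl0.le, h1]
    have h2 : (1:ℝ) / N * (q j * N) = q j := by field_simp
    rw [h2, ← hq, Real.rpow_def_of_pos hl0, mul_div_cancel₀ _ hll.ne, Real.exp_log (hr j).1]

theorem aux_lipEquiv {X : Type*} [MetricSpace X] {E : Set ℝ} {F : Set X} (h : LipEquiv E F) :
    ∃ (φ : X → ℝ) (C : ℝ), 0 < C ∧ φ '' F = E ∧ (∀ x ∈ F, ∀ y ∈ F, dist (φ x) (φ y) ≤ C * dist x y) ∧
      ∀ x ∈ F, ∀ y ∈ F, dist x y ≤ C * dist (φ x) (φ y) := by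
  classical
  obtain ⟨f, hf, C, hC, hd⟩ := h
  set e := Equiv.ofBijective f hf with he
  have hfe : ∀ z, f (e.symm z) = z := fun z => e.apply_symm_apply z
  refine ⟨fun y => if h : y ∈ F then (e.symm ⟨y, h⟩ : ℝ) else 0, C, hC, ?_, ?_, ?_⟩
  · ext x
    constructor
    · rintro ⟨y, hy, rfl⟩
      simp only [hy, dite_true]
      exact (e.symm ⟨y, hy⟩).2
    · intro hx
      refine ⟨f ⟨x, hx⟩, (f ⟨x, hx⟩).2, ?_⟩
      have : e.symm (f ⟨x, hx⟩) = ⟨x, hx⟩ := e.symm_apply_apply ⟨x, hx⟩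
      simp [this]
  · intro x hx y hy
    simp only [hx, hy, dite_true]
    have h1 := (hd (e.symm ⟨x, hx⟩) (e.symm ⟨y, hy⟩)).1
    rw [hfe, hfe, inv_mul_le_iff₀ hC] at h1
    exact h1
  · intro x hx y hy
    simp only [hx, hy, dite_true]
    have h1 := (hd (e.symm ⟨x, hx⟩) (e.symm ⟨y, hy⟩)).2
    rw [hfe, hfe] at h1
    exact h1

open scoped Pointwise in
theorem aux_hausdorff_affine {s : ℝ} (hs : 0 < s) {c : ℝ} (hc : 0 < c) (p : ℝ) (T : Set ℝ) :
    (μH[s] ((fun x => c * x + p) '' T)).toReal = c ^ s * (μH[s] T).toReal := by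
  have h1 : (fun x => c * x + p) '' T = (IsometryEquiv.addRight p) '' (c • T) := by
    ext z
    simp only [Set.mem_image, Set.mem_smul_set, IsometryEquiv.addRight_apply, smul_eq_mul,
      exists_exists_and_eq_and]
  rw [h1, IsometryEquiv.hausdorffMeasure_image, Measure.hausdorffMeasure_smul₀ hs.le hc.ne']
  rw [ENNReal.smul_def, smul_eq_mul, ENNReal.toReal_mul]
  simp [abs_of_pos hc]

theorem aux_piece {lam : ℝ} (h0 : 0 < lam) {B E G A : Set ℝ} {s K BE σ : ℝ} (hs : 0 < s)
    (hEne : E.Nonempty)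
    (hE : E = ⋃ c ∈ B, (fun x => lam * x + c) '' E)
    (hG : ∀ l, ∀ p ∈ auxPos lam B l, ∀ q ∈ auxPos lam B l,
      |(p - q) / lam ^ l| ≤ K → (p - q) / lam ^ l ∈ G)
    (hBE : ∀ x ∈ E, ∀ y ∈ E, dist x y ≤ BE) (l : ℕ)
    (hAE : A ⊆ E) (hAne : A.Nonempty) (hsep : ∀ x ∈ A, ∀ y ∈ E, y ∉ A → σ ≤ dist x y)
    (hlσ : lam ^ l * BE < σ) (hdiam : ∀ x ∈ A, ∀ y ∈ A, dist x y ≤ K * lam ^ l) :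
    ∃ a ∈ (fun S : Set ℝ => (μH[s] (⋃ d ∈ S, (fun x => x + d) '' E)).toReal) '' (𝒫 G),
      (μH[s] A).toReal = (lam ^ l) ^ s * a := by
  have hlp : 0 < lam ^ l := pow_pos h0 l
  have hEl := auxPos_union hE l
  set S0 : Set ℝ := {p ∈ auxPos lam B l | (fun x => lam ^ l * x + p) '' E ⊆ A} with hS0
  have hcov : ∀ x ∈ A, ∃ p ∈ S0, ∃ y ∈ E, lam ^ l * y + p = x := by
    intro x hx
    have hxE := hAE hx
    rw [hEl] at hxE
    simp only [Set.mem_iUnion] at hxE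
    obtain ⟨p, hp, y, hy, hyx⟩ := hxE
    refine ⟨p, ⟨hp, ?_⟩, y, hy, hyx⟩
    rintro _ ⟨z, hz, rfl⟩
    by_contra hn
    have hzE : lam ^ l * z + p ∈ E := by
      rw [hEl]
      simp only [Set.mem_iUnion]
      exact ⟨p, hp, z, hz, rfl⟩
    have h1 := hsep x hx _ hzE hn
    simp only at hyx
    rw [← hyx, Real.dist_eq] at h1
    have h2 : lam ^ l * y + p - (lam ^ l * z + p) = lam ^ l * (y - z) := by ring
    rw [h2, abs_mul, abs_of_pos hlp] at h1
    have h3 := hBE y hy z hz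
    rw [Real.dist_eq] at h3
    have h4 := mul_le_mul_of_nonneg_left h3 hlp.le
    linarith
  obtain ⟨x0, hx0⟩ := hAne
  obtain ⟨p0, hp0, -⟩ := hcov x0 hx0
  obtain ⟨e0, he0⟩ := hEne
  set S : Set ℝ := (fun p => (p - p0) / lam ^ l) '' S0 with hS
  have hSG : S ⊆ G := by
    rintro _ ⟨p, hp, rfl⟩
    refine hG l p hp.1 p0 hp0.1 ?_
    have h1 := hdiam _ (hp.2 ⟨e0, he0, rfl⟩) _ (hp0.2 ⟨e0, he0, rfl⟩)
    rw [Real.dist_eq] at h1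
    simp only [add_sub_add_left_eq_sub] at h1
    rw [abs_div, abs_of_pos hlp, div_le_iff₀ hlp]
    exact h1
  refine ⟨_, ⟨S, hSG, rfl⟩, ?_⟩
  rw [← aux_hausdorff_affine hs hlp p0]
  congr 2
  ext x
  constructor
  · intro hx
    obtain ⟨p, hp, y, hy, rfl⟩ := hcov x hx
    refine ⟨y + (p - p0) / lam ^ l, ?_, ?_⟩
    · simp only [Set.mem_iUnion]
      exact ⟨_, ⟨p, hp, rfl⟩, y, hy, rfl⟩
    · simp only
      field_simp
      ring
  · rintro ⟨z, hz, rfl⟩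
    simp only [Set.mem_iUnion] at hz
    obtain ⟨_, ⟨p, hp, rfl⟩, y, hy, rfl⟩ := hz
    have h1 := hp.2 ⟨y, hy, rfl⟩
    simp only at h1 ⊢
    convert h1 using 1
    field_simp
    ring

/-- **Proposition 1.** If `E ∈ 𝒜(λ, n, m)` is Lipschitz equivalent to a
dust-like self-similar set `F = ⋃ⱼ gⱼ(F)` with ratios `rⱼ`, then there are `r ∈ (0,1)` and
positive integers `k`, `k₁, …, k_t` with `λ = r^k` and `rⱼ = r^(kⱼ)` for all `j`;
equivalently, `log rⱼ / log λ ∈ ℚ` for all `j`. -/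
theorem commensurable_ratios_of_lipEquiv_dustLike
    (lam : ℝ) (n m : ℕ) (E : Set ℝ) (hE : IsInClassA lam n m E)
    (d t : ℕ) (ht : 2 ≤ t)
    (F : Set (EuclideanSpace ℝ (Fin d)))
    (g : Fin t → EuclideanSpace ℝ (Fin d) → EuclideanSpace ℝ (Fin d))
    (r : Fin t → ℝ)
    (hr : ∀ j, r j ∈ Set.Ioo (0 : ℝ) 1)
    (hg : ∀ j x y, dist (g j x) (g j y) = r j * dist x y)
    (hFne : F.Nonempty) (hFc : IsCompact F)
    (hFattr : F = ⋃ j, g j '' F)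
    (hsep : ∀ j j', j ≠ j' → Disjoint (g j '' F) (g j' '' F))
    (hLip : LipEquiv E F) :
    (∃ r₀ : ℝ, r₀ ∈ Set.Ioo (0 : ℝ) 1 ∧ ∃ k : ℕ, 0 < k ∧ ∃ ks : Fin t → ℕ,
      (∀ j, 0 < ks j) ∧ lam = r₀ ^ k ∧ ∀ j, r j = r₀ ^ ks j) ∧
    ∀ j, ∃ q : ℚ, Real.log (r j) / Real.log lam = (q : ℝ) := by
  obtain ⟨B, hBf, hl0, hl2, hB, hB0, hB1, hgap, hEne, hEc, hEeq⟩ := aux_classA_s4 hE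
  have hl1 : lam < 1 := by linarith
  refine aux_final hr hl0 hl1 ?_
  obtain ⟨s, hs, hsum⟩ := aux_exists_exponent ht r hr
  have hHfin := aux_hausdorff_lt_top hr hg hFc hFattr hs hsum
  have hHpos := aux_hausdorff_pos hr hg hFc hFne hFattr hsep hs hsum
  obtain ⟨φ, C, hC, hφE, hφ1, hφ2⟩ := aux_lipEquiv hLip
  obtain ⟨δ, hδ, hd⟩ := aux_exists_sep hr hg hFc hsep
  obtain ⟨η, hη0, hη1, hη⟩ := aux_exists_min hr
  have hφlip : LipschitzOnWith C.toNNReal φ F := by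
    refine LipschitzOnWith.of_dist_le_mul fun x hx y hy => ?_
    rw [Real.coe_toNNReal _ hC.le]
    exact hφ1 x hx y hy
  have hφinj : Set.InjOn φ F := by
    intro x hx y hy h
    have h1 := hφ2 x hx y hy
    rw [h, dist_self, mul_zero] at h1
    exact dist_le_zero.1 h1
  have hsub := fun w => auxCyl_subset hFattr w
  set A : List (Fin t) → Set ℝ := fun w => φ '' auxCyl g F w with hA
  have hAc : ∀ w, IsCompact (A w) := fun w =>
    (auxCyl_compact hr hg hFc w).image_of_continuousOn (hφlip.continuousOn.mono (hsub w))
  have hAE : ∀ w, A w ⊆ E := fun w => by rw [← hφE]; exact Set.image_mono (hsub w)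
  have hub : ∀ w, μH[s] (A w) ≤ ENNReal.ofReal (C ^ s) *
      (ENNReal.ofReal (auxR r w ^ s) * μH[s] F) := by
    intro w
    refine ((hφlip.mono (hsub w)).hausdorffMeasure_image_le hs.le).trans ?_
    refine mul_le_mul' ?_ (auxCyl_hausdorff hr hg hs w)
    rw [← ENNReal.ofReal_rpow_of_pos hC]
    rfl
  have hAfin : ∀ w, μH[s] (A w) ≠ ⊤ := fun w =>
    ((hub w).trans_lt (ENNReal.mul_lt_top ENNReal.ofReal_lt_top
      (ENNReal.mul_lt_top ENNReal.ofReal_lt_top hHfin))).ne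
  have hApos : 0 < μH[s] (A []) := by
    have hanti : AntilipschitzWith C.toNNReal (F.domRestrict φ) := by
      refine AntilipschitzWith.of_le_mul_dist fun x y => ?_
      rw [Real.coe_toNNReal _ hC.le]
      exact hφ2 x x.2 y y.2
    have h1 := hanti.le_hausdorffMeasure_image hs.le Set.univ
    have h2 : μH[s] (Subtype.val '' (Set.univ : Set F)) = μH[s] (Set.univ : Set F) :=
      isometry_subtype_coe.hausdorffMeasure_image (Or.inl hs.le) _
    have h3 : F.domRestrict φ '' Set.univ = A [] := by
      rw [Set.image_univ, Set.range_domRestrict]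
      rfl
    rw [← h2, h3] at h1
    simp only [Set.image_univ, Subtype.range_coe_subtype, Set.ofPred_mem_eq] at h1
    by_contra hn
    have h4 : μH[s] (A []) = 0 := by simpa using hn
    rw [h4, mul_zero] at h1
    exact absurd hHpos (not_lt.2 h1)
  obtain ⟨BE', hBE'⟩ := Metric.isBounded_iff.1 hEc.isBounded
  obtain ⟨BE, hBE0, hBE⟩ : ∃ BE : ℝ, 0 < BE ∧ ∀ x ∈ E, ∀ y ∈ E, dist x y ≤ BE :=
    ⟨max BE' 1, by positivity, fun x hx y hy => (hBE' hx hy).trans (le_max_left _ _)⟩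
  obtain ⟨BF', hBF'⟩ := Metric.isBounded_iff.1 hFc.isBounded
  obtain ⟨BF, hBF0, hBF⟩ : ∃ BF : ℝ, 0 < BF ∧ ∀ x ∈ F, ∀ y ∈ F, dist x y ≤ BF :=
    ⟨max BF' 1, by positivity, fun x hx y hy => (hBF' hx hy).trans (le_max_left _ _)⟩
  obtain ⟨c0, hc0, hc01, hc0'⟩ : ∃ c0 : ℝ, 0 < c0 ∧ c0 ≤ 1 ∧ c0 * BE ≤ δ / C := by
    refine ⟨min 1 (δ / C / BE), by positivity, min_le_left _ _, ?_⟩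
    rw [← le_div_iff₀ hBE0]
    exact min_le_right _ _
  set K : ℝ := C * BF / (c0 * η * lam) with hK
  obtain ⟨G, hGf, hG⟩ := aux_finite_type hBf hl0 hl2 hB hB0 hB1 hgap K
  set V := (fun S : Set ℝ => (μH[s] (⋃ d ∈ S, (fun x => x + d) '' E)).toReal) '' (𝒫 G) with hV
  have hVf : V.Finite := hGf.finite_subsets.image _
  have hpiece : ∀ w u (l : ℕ), η * auxR r w ≤ auxR r u → auxR r u ≤ auxR r w →
      lam ^ (l + 1) < c0 * η * auxR r w → c0 * η * auxR r w ≤ lam ^ l →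
      ∃ a ∈ V, (μH[s] (A u)).toReal = (lam ^ (l + 1)) ^ s * a := by
    intro w u l h1 h2 h3 h4
    refine aux_piece (σ := δ * auxR r u / C) hl0 hs hEne hEeq hG hBE (l + 1) (hAE u)
      ((auxCyl_nonempty hFne u).image _) ?_ ?_ ?_
    · rintro _ ⟨x, hx, rfl⟩ y hy hyA
      rw [← hφE] at hy
      obtain ⟨y, hyF, rfl⟩ := hy
      have h5 := auxCyl_sep hr hg hFattr hδ hd u x hx y hyF (fun h => hyA ⟨y, h, rfl⟩)
      have h6 := hφ2 x (hsub u hx) y hyF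
      rw [div_le_iff₀ hC]
      linarith
    · calc lam ^ (l + 1) * BE < c0 * η * auxR r w * BE := mul_lt_mul_of_pos_right h3 hBE0
        _ = c0 * BE * (η * auxR r w) := by ring
        _ ≤ δ / C * auxR r u := by
          refine mul_le_mul hc0' h1 ?_ (by positivity)
          exact mul_nonneg hη0.le (auxR_pos hr w).le
        _ = δ * auxR r u / C := by ring
    · rintro _ ⟨x, hx, rfl⟩ _ ⟨y, hy, rfl⟩
      have h5 := hφ1 x (hsub u hx) y (hsub u hy)
      have h6 := auxCyl_dist hr hg hBF u x hx y hy
      have h7 : K * lam ^ (l + 1) = C * BF / (c0 * η) * lam ^ l := by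
        rw [hK, pow_succ]
        field_simp
      rw [h7]
      calc dist (φ x) (φ y) ≤ C * dist x y := h5
        _ ≤ C * (auxR r u * BF) := mul_le_mul_of_nonneg_left h6 hC.le
        _ ≤ C * (auxR r w * BF) := by gcongr
        _ = C * BF / (c0 * η) * (c0 * η * auxR r w) := by field_simp
        _ ≤ C * BF / (c0 * η) * lam ^ l := by gcongr
  refine aux_rigidity hr hs hsum hl0 (fun w => (μH[s] (A w)).toReal)
    (ENNReal.toReal_pos hApos.ne' (hAfin [])) (C ^ s * (μH[s] F).toReal) ?_ ?_ V hVf ?_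
  · intro w
    have h1 : A w = ⋃ j, A (w ++ [j]) := by
      simp only [hA]
      rw [← Set.image_iUnion, ← auxCyl_snoc hFattr w]
    rw [h1, measure_iUnion, tsum_fintype, ENNReal.toReal_sum (fun j _ => hAfin _)]
    · intro i j hij
      refine Set.disjoint_left.2 ?_
      rintro _ ⟨x, hx, rfl⟩ ⟨y, hy, hyx⟩
      have hxy := hφinj (hsub _ hy) (hsub _ hx) hyx
      subst hxy
      exact Set.disjoint_left.1 (auxCyl_disj hr hg hsep w hij) hx hy
    · exact fun j => (hAc _).measurableSet
  · intro w
    have h1 := ENNReal.toReal_mono (ENNReal.mul_lt_top ENNReal.ofReal_lt_top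
      (ENNReal.mul_lt_top ENNReal.ofReal_lt_top hHfin)).ne (hub w)
    rw [ENNReal.toReal_mul, ENNReal.toReal_mul, ENNReal.toReal_ofReal (by positivity),
      ENNReal.toReal_ofReal (Real.rpow_nonneg (auxR_pos hr w).le _)] at h1
    simp only
    linarith
  · intro w
    have hRp := auxR_pos hr w
    obtain ⟨l, hl, hl'⟩ := exists_nat_pow_near_of_lt_one (x := c0 * η * auxR r w)
      (by positivity) (mul_le_one₀ (mul_le_one₀ hc01 hη0.le hη1) hRp.le (auxR_le_one hr w)) hl0 hl1
    refine ⟨l + 1, hpiece w w l (mul_le_of_le_one_left hRp.le hη1) le_rfl hl hl', fun j => ?_⟩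
    refine hpiece w (w ++ [j]) l ?_ ?_ hl hl'
    · rw [auxR_snoc, mul_comm]
      exact mul_le_mul_of_nonneg_left (hη j) hRp.le
    · rw [auxR_snoc]
      exact mul_le_of_le_one_right hRp.le (hr j).2.le
end
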